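/- Let N ≥ 1 and σ = 4/N, and set k* = (σ+1)^{1/σ} B(N,σ)^{-1/σ}. Then E_min(m) is finite for every m ∈ (0, k*) and E_min(m) = -∞ for every m ≥ k*. In addition, for any k₁ < k* and any k₂ > 0, the set {u ∈ H²(ℝ^N) : ‖u‖_{L²}² ≤ k₁ and E(u) ≤ k₂} is bounded in H²(ℝ^N). -/

import Mathlib

open MeasureTheory Filter Topology

noncomputable section

abbrev Esp (N : ℕ) := EuclideanSpace ℝ (Fin N)

/-- Smooth compactly supported test functions. -/
def TestFun {N : ℕ} (φ : Esp N → ℂ) : Prop :=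
  ContDiff ℝ (⊤ : ℕ∞) φ ∧ HasCompactSupport φ

/-- Partial derivative in the `i`-th coordinate direction. -/
def pderivC {N : ℕ} (i : Fin N) (φ : Esp N → ℂ) : Esp N → ℂ :=
  fun x => fderiv ℝ φ x (EuclideanSpace.single i (1 : ℝ))

/-- The Laplacian of a (smooth) function. -/
def lapC {N : ℕ} (φ : Esp N → ℂ) : Esp N → ℂ :=
  fun x => ∑ i, pderivC i (pderivC i φ) x

/-- `v` is the weak `i`-th partial derivative of `u`. -/
def IsWeakPDeriv {N : ℕ} (u : Esp N → ℂ) (i : Fin N) (v : Esp N → ℂ) : Prop :=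
  ∀ φ : Esp N → ℂ, TestFun φ → ∫ x, u x * pderivC i φ x = - ∫ x, v x * φ x

/-- `v` is the weak Laplacian of `u`. -/
def IsWeakLap {N : ℕ} (u v : Esp N → ℂ) : Prop :=
  ∀ φ : Esp N → ℂ, TestFun φ → ∫ x, u x * lapC φ x = ∫ x, v x * φ x

/-- An element of the Sobolev space `H²(ℝ^N, ℂ)`: an `L²` function together with its
weak partial derivatives and its weak Laplacian, all in `L²`. -/
structure H2 (N : ℕ) where
  u : Esp N → ℂ
  grad : Fin N → Esp N → ℂ
  lapl : Esp N → ℂ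
  u_mem : MemLp u 2 (volume : Measure (Esp N))
  grad_mem : ∀ i, MemLp (grad i) 2 (volume : Measure (Esp N))
  lapl_mem : MemLp lapl 2 (volume : Measure (Esp N))
  grad_spec : ∀ i, IsWeakPDeriv u i (grad i)
  lapl_spec : IsWeakLap u lapl

namespace H2

variable {N : ℕ}

/-- `∫ |u|²`. -/
def massSq (U : H2 N) : ℝ := ∫ x, ‖U.u x‖ ^ 2

/-- `∫ |∇u|²`. -/
def gradSq (U : H2 N) : ℝ := ∑ i, ∫ x, ‖U.grad i x‖ ^ 2

/-- `∫ |Δu|²`. -/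
def lapSq (U : H2 N) : ℝ := ∫ x, ‖U.lapl x‖ ^ 2

/-- `∫ |u|^{2σ+2}`. -/
def pPow (σ : ℝ) (U : H2 N) : ℝ := ∫ x, ‖U.u x‖ ^ (2 * σ + 2)

/-- The energy `E(u) = ∫|Δu|² - 2∫|∇u|² - (1/(σ+1))∫|u|^{2σ+2}`. -/
def energy (σ : ℝ) (U : H2 N) : ℝ :=
  U.lapSq - 2 * U.gradSq - (1 / (σ + 1)) * U.pPow σ

/-- The square of the `H²` norm. -/
def h2NormSq (U : H2 N) : ℝ := U.massSq + U.gradSq + U.lapSq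

/-- `u` does not vanish almost everywhere. -/
def Nontriv (U : H2 N) : Prop := ¬ (U.u =ᵐ[(volume : Measure (Esp N))] 0)

end H2

/-- `E_min(m) = inf {E(u) : u ∈ H², ∫|u|² = m}`, with values in `EReal`. -/
def EminE (N : ℕ) (σ m : ℝ) : EReal :=
  ⨅ (U : H2 N) (_ : U.massSq = m), ((U.energy σ : ℝ) : EReal)

/-- The `L^p` norm (as a real number) of a function on `ℝ^N`. -/
def rLp {N : ℕ} (p : ℝ) (f : Esp N → ℂ) : ℝ :=
  (eLpNorm f (ENNReal.ofReal p) (volume : Measure (Esp N))).toReal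


/-- The best constant `B(N,σ)` in the Gagliardo–Nirenberg–Sobolev inequality
`‖u‖_{L^{2σ+2}}^{2σ+2} ≤ B ‖Δu‖_{L²}^{Nσ/2} ‖u‖_{L²}^{2+2σ-Nσ/2}`. -/
def GNconst (N : ℕ) (σ : ℝ) : ℝ :=
  sSup {r : ℝ | ∃ U : H2 N, U.Nontriv ∧
    r = U.pPow σ /
      (rLp 2 U.lapl ^ ((N : ℝ) * σ / 2) * rLp 2 U.u ^ (2 + 2 * σ - (N : ℝ) * σ / 2))}

/-- `k* = (σ+1)^{1/σ} B(N,σ)^{-1/σ}`. -/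
def kstar (N : ℕ) (σ : ℝ) : ℝ := (σ + 1) ^ (1 / σ) * GNconst N σ ^ (-(1 / σ))

/-- Strong `H²` convergence of `v k (· + xs k)` to `U`. -/
def H2TendstoTrans {N : ℕ} (v : ℕ → H2 N) (xs : ℕ → Esp N) (U : H2 N) : Prop :=
  Tendsto (fun k => eLpNorm (fun x => (v k).u (x + xs k) - U.u x) 2
      (volume : Measure (Esp N))) atTop (nhds 0) ∧
  (∀ i, Tendsto (fun k => eLpNorm (fun x => (v k).grad i (x + xs k) - U.grad i x) 2
      (volume : Measure (Esp N))) atTop (nhds 0)) ∧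
  Tendsto (fun k => eLpNorm (fun x => (v k).lapl (x + xs k) - U.lapl x) 2
      (volume : Measure (Esp N))) atTop (nhds 0)

/-- `u` is a weak (`H^{-2}`) solution of `Δ²u + 2Δu + (1+c)u - |u|^{2σ}u = 0`. -/
def SolvesSW {N : ℕ} (σ c : ℝ) (U : H2 N) : Prop :=
  ∀ φ : Esp N → ℂ, TestFun φ →
    (∫ x, U.lapl x * lapC φ x) + 2 * (∫ x, U.lapl x * φ x) +
        ((1 + c : ℝ) : ℂ) * (∫ x, U.u x * φ x) -
        (∫ x, ((‖U.u x‖ ^ (2 * σ) : ℝ) : ℂ) * U.u x * φ x) = 0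

/-- `T_c(u) = ∫|Δu|² - 2∫|∇u|² + (1+c)∫|u|²`. -/
def Tfun {N : ℕ} (c : ℝ) (U : H2 N) : ℝ := U.lapSq - 2 * U.gradSq + (1 + c) * U.massSq

/-- `t(c) = inf {T_c(u) : ∫|u|^{2σ+2} = 1}`. -/
def tmin (N : ℕ) (σ c : ℝ) : ℝ := sInf {r : ℝ | ∃ U : H2 N, U.pPow σ = 1 ∧ r = Tfun c U}

/-- The action `S_c(u) = E(u) + (1+c)‖u‖_{L²}² = T_c(u) - (1/(σ+1))∫|u|^{2σ+2}`. -/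
def action {N : ℕ} (σ c : ℝ) (U : H2 N) : ℝ := U.energy σ + (1 + c) * U.massSq

section
open scoped SchwartzMap FourierTransform LineDeriv ContDiff

theorem pairF {N : ℕ} (f : Lp (α := Esp N) ℂ 2) (ψ : 𝓢(Esp N, ℂ)) :
    ∫ x, ψ x * (𝓕 f : Lp (α := Esp N) ℂ 2) x = ∫ x, (𝓕 ψ) x * f x := by
  have h := congrArg (fun T => T ψ) (Lp.fourier_toTemperedDistribution_eq f)
  simp only [TemperedDistribution.fourier_apply, Lp.toTemperedDistribution_apply, smul_eq_mul] at h
  exact h.symm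

theorem pairFinv {N : ℕ} (f : Lp (α := Esp N) ℂ 2) (ψ : 𝓢(Esp N, ℂ)) :
    ∫ x, ψ x * (𝓕⁻ f : Lp (α := Esp N) ℂ 2) x = ∫ x, (𝓕⁻ ψ) x * f x := by
  have h := congrArg (fun T => T ψ) (Lp.fourierInv_toTemperedDistribution_eq f)
  simp only [TemperedDistribution.fourierInv_apply, Lp.toTemperedDistribution_apply, smul_eq_mul] at h
  exact h.symm

/-- equality a.e. from testing -/
theorem ae_eq_of_schwartz {N : ℕ} {f g : Esp N → ℂ} (hf : LocallyIntegrable f)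
    (hg : LocallyIntegrable g)
    (h : ∀ ψ : 𝓢(Esp N, ℂ), HasCompactSupport ψ → ∫ x, ψ x * f x = ∫ x, ψ x * g x) :
    f =ᵐ[volume] g := by
  apply ae_eq_of_integral_contDiff_smul_eq hf hg
  intro k k_smooth k_cpt
  have hg₁ : HasCompactSupport (Complex.ofRealCLM ∘ k) := k_cpt.comp_left rfl
  have hg₂ : ContDiff ℝ ∞ (Complex.ofRealCLM ∘ k) := by fun_prop
  have := h (hg₁.toSchwartzMap hg₂) hg₁
  simpa using this

theorem fourierInv_bound {N : ℕ} (f : Lp (α := Esp N) ℂ 2) (hf : Integrable f (volume : Measure (Esp N))) :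
    ∀ᵐ x ∂(volume : Measure (Esp N)), ‖(𝓕⁻ f : Lp (α := Esp N) ℂ 2) x‖ ≤ ∫ y, ‖f y‖ := by
  have key : ⇑(𝓕⁻ f : Lp (α := Esp N) ℂ 2 (volume : Measure (Esp N))) =ᵐ[volume] 𝓕⁻ (f : Esp N → ℂ) := by
    have hbd : ∀ x, ‖𝓕⁻ (f : Esp N → ℂ) x‖ ≤ ∫ y, ‖f y‖ := by
      intro x
      rw [Real.fourierInv_eq]
      exact (norm_integral_le_integral_norm _).trans (by simp)
    have hcont : Continuous (𝓕⁻ (f : Esp N → ℂ)) := by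
      have := VectorFourier.fourierIntegral_continuous (μ := (volume : Measure (Esp N)))
        Real.continuous_fourierChar (L := -(innerₗ (Esp N))) (by
          simp only [LinearMap.neg_apply, innerₗ_apply_apply]; fun_prop) hf
      exact this
    refine ae_eq_of_schwartz ((Lp.memLp _).locallyIntegrable (by norm_num)) hcont.locallyIntegrable ?_
    intro ψ _
    rw [pairFinv]
    have := VectorFourier.integral_fourierIntegral_smul_eq_flip (μ := (volume : Measure (Esp N)))
      (ν := (volume : Measure (Esp N))) (L := -(innerₗ (Esp N)))
      Real.continuous_fourierChar (by
          simp only [LinearMap.neg_apply, innerₗ_apply_apply]; fun_prop) (f := ψ) (g := f) ψ.integrable hf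
    have e : (-(innerₗ (Esp N))).flip = -(innerₗ (Esp N)) := by
      ext x y; simp [real_inner_comm]
    rw [e] at this
    simp only [smul_eq_mul] at this
    rw [SchwartzMap.fourierInv_coe]
    exact this
  filter_upwards [key] with x hx
  rw [hx, Real.fourierInv_eq]
  exact (norm_integral_le_integral_norm _).trans (by simp)

abbrev eb {N : ℕ} (i : Fin N) : Esp N := EuclideanSpace.single i (1 : ℝ)

/-- Partial derivative on Schwartz functions. -/
def dS {N : ℕ} (i : Fin N) (φ : 𝓢(Esp N, ℂ)) : 𝓢(Esp N, ℂ) := ∂_{eb i} φ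

theorem pderivC_schwartz {N : ℕ} (i : Fin N) (φ : 𝓢(Esp N, ℂ)) :
    pderivC i (φ : Esp N → ℂ) = ⇑(dS i φ) := rfl

theorem pderivC_mul {N : ℕ} (i : Fin N) {f g : Esp N → ℂ} (hf : Differentiable ℝ f)
    (hg : Differentiable ℝ g) :
    pderivC i (fun x => f x * g x) = fun x => pderivC i f x * g x + f x * pderivC i g x := by
  funext x
  simp only [pderivC]
  rw [fderiv_fun_mul (hf x) (hg x)]
  simp [mul_comm]
  ring

theorem pderivC_add {N : ℕ} (i : Fin N) {f g : Esp N → ℂ} (hf : Differentiable ℝ f)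
    (hg : Differentiable ℝ g) :
    pderivC i (fun x => f x + g x) = fun x => pderivC i f x + pderivC i g x := by
  funext x
  simp only [pderivC]
  rw [fderiv_fun_add (hf x) (hg x)]
  simp

theorem pderivC_const_mul {N : ℕ} (i : Fin N) {f : Esp N → ℂ} (hf : Differentiable ℝ f) (c : ℂ) :
    pderivC i (fun x => c * f x) = fun x => c * pderivC i f x := by
  funext x
  simp only [pderivC]
  rw [fderiv_const_mul (hf x)]
  simp

theorem pderivC_scale {N : ℕ} (i : Fin N) (f : Esp N → ℂ) (c : ℝ) :
    pderivC i (fun x => f (c • x)) = fun x => (c : ℂ) * pderivC i f (c • x) := by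
  funext x
  simp only [pderivC]
  rw [fderiv_comp_smul]
  simp

theorem tend_pair {N : ℕ} {u : Esp N → ℂ} {Q : ℕ → Esp N → ℂ} {Q' : Esp N → ℂ}
    (hu : MemLp u 2 (volume : Measure (Esp N))) {s : Esp N → ℝ}
    (hs : MemLp s 2 (volume : Measure (Esp N)))
    (hQ : ∀ n, Continuous (Q n)) (hb : ∀ n x, ‖Q n x‖ ≤ s x)
    (hl : ∀ x, Tendsto (fun n => Q n x) atTop (𝓝 (Q' x))) :
    Tendsto (fun n => ∫ x, u x * Q n x) atTop (𝓝 (∫ x, u x * Q' x)) := by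
  refine tendsto_integral_of_dominated_convergence (fun x => ‖u x‖ * s x) ?_ ?_ ?_ ?_
  · intro n; exact hu.1.mul (hQ n).aestronglyMeasurable
  · exact hu.norm.integrable_mul hs
  · intro n; filter_upwards with x
    rw [norm_mul]; exact mul_le_mul_of_nonneg_left (hb n x) (norm_nonneg _)
  · filter_upwards with x
    exact (hl x).const_mul _

theorem schw_diff {N : ℕ} (φ : 𝓢(Esp N, ℂ)) : Differentiable ℝ (φ : Esp N → ℂ) := φ.differentiable

theorem schw_bdd {N : ℕ} (φ : 𝓢(Esp N, ℂ)) : ∃ K : ℝ, 0 ≤ K ∧ ∀ x, ‖φ x‖ ≤ K :=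
  ⟨(SchwartzMap.seminorm ℝ 0 0) φ, apply_nonneg _ _, fun x => φ.norm_le_seminorm ℝ x⟩

theorem exists_cut (N : ℕ) : ∃ X : 𝓢(Esp N, ℂ), HasCompactSupport X ∧ X 0 = 1 := by
  let b : ContDiffBump (0 : Esp N) := ⟨1, 2, by norm_num, by norm_num⟩
  have hg₁ : HasCompactSupport (Complex.ofRealCLM ∘ b) := b.hasCompactSupport.comp_left rfl
  have hg₂ : ContDiff ℝ ∞ (Complex.ofRealCLM ∘ b) := by
    exact Complex.ofRealCLM.contDiff.comp b.contDiff
  refine ⟨hg₁.toSchwartzMap hg₂, hg₁, ?_⟩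
  have : b 0 = 1 := b.one_of_mem_closedBall (by simp [b])
  simp [this]

def cn (n : ℕ) : ℝ := 1 / ((n : ℝ) + 1)

theorem cn_pos (n : ℕ) : 0 < cn n := by unfold cn; positivity
theorem cn_le (n : ℕ) : cn n ≤ 1 := by
  unfold cn; rw [div_le_one (by positivity)]; linarith [n.cast_nonneg (α := ℝ)]
theorem cn_tend : Tendsto cn atTop (𝓝 0) := tendsto_one_div_add_atTop_nhds_zero_nat

theorem cut_test {N : ℕ} (X φ : 𝓢(Esp N, ℂ)) (hX : HasCompactSupport X) (n : ℕ) :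
    TestFun (fun x => X (cn n • x) * φ x) := by
  constructor
  · have h1 : ContDiff ℝ ∞ X := X.smooth ⊤
    have h2 : ContDiff ℝ ∞ φ := φ.smooth ⊤
    have : ContDiff ℝ ∞ (fun x => X (cn n • x) * φ x) := by fun_prop
    exact this
  · have : HasCompactSupport (fun x => X (cn n • x)) := by
      have := hX.comp_smul (cn_pos n).ne'
      exact this
    exact this.mul_right

theorem tend_at {N : ℕ} (Y : 𝓢(Esp N, ℂ)) (x : Esp N) :
    Tendsto (fun n => Y (cn n • x)) atTop (𝓝 (Y 0)) := by
  have : Continuous (fun c : ℝ => Y (c • x)) := by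
    have := Y.continuous; fun_prop
  have h := (this.tendsto 0).comp cn_tend
  simpa [Function.comp_def] using h

theorem weak_pd_schwartz {N : ℕ} {u v : Esp N → ℂ} {i : Fin N}
    (hu : MemLp u 2 (volume : Measure (Esp N))) (hv : MemLp v 2 (volume : Measure (Esp N)))
    (h : IsWeakPDeriv u i v) (φ : 𝓢(Esp N, ℂ)) :
    ∫ x, u x * (dS i φ) x = - ∫ x, v x * φ x := by
  obtain ⟨X, hX, hX0⟩ := exists_cut N
  obtain ⟨K, hK, hKX⟩ := schw_bdd X
  obtain ⟨K1, hK1, hKX1⟩ := schw_bdd (dS i X)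
  have e1 : ∀ n, pderivC i (fun x => X (cn n • x) * φ x) =
      fun x => (cn n : ℂ) * (dS i X) (cn n • x) * φ x + X (cn n • x) * (dS i φ) x := by
    intro n
    have hd : Differentiable ℝ (fun x => X (cn n • x)) := by
      have := X.differentiable; fun_prop
    rw [pderivC_mul i hd φ.differentiable, pderivC_scale]
    rfl
  have t1 : Tendsto (fun n => ∫ x, u x * pderivC i (fun x => X (cn n • x) * φ x) x) atTop
      (𝓝 (∫ x, u x * (dS i φ) x)) := by
    refine tend_pair hu (s := fun x => K1 * ‖φ x‖ + K * ‖(dS i φ) x‖)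
      (((φ.memLp 2).norm.const_mul K1).add (((dS i φ).memLp 2).norm.const_mul K)) ?_ ?_ ?_
    · intro n
      rw [e1]
      have := X.continuous
      have := (dS i X).continuous
      have := (dS i φ).continuous
      have := φ.continuous
      fun_prop
    · intro n x
      rw [e1]
      refine (norm_add_le _ _).trans ?_
      simp only [norm_mul, Complex.norm_real, Real.norm_eq_abs, abs_of_pos (cn_pos n)]
      have a1 : cn n * ‖(dS i X) (cn n • x)‖ ≤ 1 * K1 :=
        mul_le_mul (cn_le n) (hKX1 _) (norm_nonneg _) (by norm_num)
      rw [one_mul] at a1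
      have a3 := hKX (cn n • x)
      exact add_le_add (mul_le_mul_of_nonneg_right a1 (norm_nonneg _))
        (mul_le_mul_of_nonneg_right a3 (norm_nonneg _))
    · intro x
      simp only [e1]
      have a := (((Complex.continuous_ofReal.tendsto 0).comp cn_tend).mul
        (tend_at (dS i X) x)).mul_const (φ x)
      have b := (tend_at X x).mul_const ((dS i φ) x)
      have := a.add b
      simpa [hX0] using this
  have t2 : Tendsto (fun n => ∫ x, v x * (X (cn n • x) * φ x)) atTop
      (𝓝 (∫ x, v x * φ x)) := by
    refine tend_pair hv (s := fun x => K * ‖φ x‖) ((φ.memLp 2).norm.const_mul K) ?_ ?_ ?_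
    · intro n
      have := X.continuous
      have := φ.continuous
      fun_prop
    · intro n x
      rw [norm_mul]
      gcongr
      exact hKX _
    · intro x
      have b := (tend_at X x).mul_const (φ x)
      simpa [hX0] using b
  refine tendsto_nhds_unique t1 ?_
  have : ∀ n, _ := fun n => h _ (cut_test X φ hX n)
  simp only [this]
  exact t2.neg

theorem weak_lap_schwartz {N : ℕ} {u v : Esp N → ℂ}
    (hu : MemLp u 2 (volume : Measure (Esp N))) (hv : MemLp v 2 (volume : Measure (Esp N)))
    (h : IsWeakLap u v) (φ : 𝓢(Esp N, ℂ)) :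
    ∫ x, u x * (∑ i, (dS i (dS i φ)) x) = ∫ x, v x * φ x := by
  obtain ⟨X, hX, hX0⟩ := exists_cut N
  obtain ⟨K, hK, hKX⟩ := schw_bdd X
  choose K1 hK1 hKX1 using fun i : Fin N => schw_bdd (dS i X)
  choose K2 hK2 hKX2 using fun i : Fin N => schw_bdd (dS i (dS i X))
  have e1 : ∀ n, lapC (fun x => X (cn n • x) * φ x) =
      fun x => ∑ i, ((cn n : ℂ) * (cn n : ℂ) * (dS i (dS i X)) (cn n • x) * φ x
        + 2 * ((cn n : ℂ) * (dS i X) (cn n • x) * (dS i φ) x)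
        + X (cn n • x) * (dS i (dS i φ)) x) := by
    intro n
    funext x
    unfold lapC
    refine Finset.sum_congr rfl fun i _ => ?_
    have hd : ∀ Y : 𝓢(Esp N, ℂ), Differentiable ℝ (fun x => Y (cn n • x)) := by
      intro Y
      have := Y.differentiable; fun_prop
    have hp := φ.differentiable
    have hp1 := (dS i φ).differentiable
    have hx0 := hd X
    have hx1 := hd (dS i X)
    have hx2 := hd (dS i (dS i X))
    rw [pderivC_mul i hx0 hp, pderivC_scale, pderivC_schwartz, pderivC_schwartz,
      pderivC_add i (by fun_prop) (by fun_prop), pderivC_mul i (by fun_prop) hp,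
      pderivC_mul i hx0 hp1, pderivC_const_mul i hx1, pderivC_scale, pderivC_scale,
      pderivC_schwartz, pderivC_schwartz, pderivC_schwartz, pderivC_schwartz]
    ring
  have t1 : Tendsto (fun n => ∫ x, u x * lapC (fun x => X (cn n • x) * φ x) x) atTop
      (𝓝 (∫ x, u x * (∑ i, (dS i (dS i φ)) x))) := by
    refine tend_pair hu (s := fun x => ∑ i, (K2 i * ‖φ x‖ + 2 * (K1 i * ‖(dS i φ) x‖)
      + K * ‖(dS i (dS i φ)) x‖)) ?_ ?_ ?_ ?_
    · refine memLp_finsetSum _ fun i _ => ?_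
      exact (((φ.memLp 2).norm.const_mul _).add
        ((((dS i φ).memLp 2).norm.const_mul _).const_mul _)).add
        (((dS i (dS i φ)).memLp 2).norm.const_mul K)
    · intro n
      rw [e1]
      refine continuous_finsetSum _ fun i _ => ?_
      have := X.continuous
      have := (dS i X).continuous
      have := (dS i (dS i X)).continuous
      have := (dS i φ).continuous
      have := (dS i (dS i φ)).continuous
      have := φ.continuous
      fun_prop
    · intro n x
      rw [e1]
      refine (norm_sum_le _ _).trans ?_
      refine Finset.sum_le_sum fun i _ => ?_
      refine (norm_add₃_le).trans ?_
      simp only [norm_mul, Complex.norm_real, Real.norm_eq_abs, abs_of_pos (cn_pos n),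
        Complex.norm_ofNat]
      have a1 : cn n * ‖(dS i X) (cn n • x)‖ ≤ 1 * K1 i :=
        mul_le_mul (cn_le n) (hKX1 _ _) (norm_nonneg _) (by norm_num)
      have a2 : cn n * cn n * ‖(dS i (dS i X)) (cn n • x)‖ ≤ (1 * 1) * K2 i :=
        mul_le_mul (mul_le_mul (cn_le n) (cn_le n) (cn_pos n).le (by norm_num)) (hKX2 _ _)
          (norm_nonneg _) (by norm_num)
      rw [one_mul] at a1
      rw [one_mul, one_mul] at a2
      have a3 := hKX (cn n • x)
      refine add_le_add (add_le_add (mul_le_mul_of_nonneg_right a2 (norm_nonneg _)) ?_)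
        (mul_le_mul_of_nonneg_right a3 (norm_nonneg _))
      exact mul_le_mul_of_nonneg_left (mul_le_mul_of_nonneg_right a1 (norm_nonneg _)) (by norm_num)
    · intro x
      simp only [e1]
      refine tendsto_finsetSum _ fun i _ => ?_
      have c0 : Tendsto (fun n => (cn n : ℂ)) atTop (𝓝 0) := by
        simpa [Function.comp_def] using (Complex.continuous_ofReal.tendsto 0).comp cn_tend
      have a := (c0.mul (tend_at (dS i X) x)).mul_const ((dS i φ) x)
      have a' := ((c0.mul c0).mul (tend_at (dS i (dS i X)) x)).mul_const (φ x)
      have b := (tend_at X x).mul_const ((dS i (dS i φ)) x)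
      have := (a'.add (a.const_mul 2)).add b
      simpa [hX0] using this
  have t2 : Tendsto (fun n => ∫ x, v x * (X (cn n • x) * φ x)) atTop
      (𝓝 (∫ x, v x * φ x)) := by
    refine tend_pair hv (s := fun x => K * ‖φ x‖) ((φ.memLp 2).norm.const_mul K) ?_ ?_ ?_
    · intro n
      have := X.continuous
      have := φ.continuous
      fun_prop
    · intro n x
      rw [norm_mul]
      gcongr
      exact hKX _
    · intro x
      have b := (tend_at X x).mul_const (φ x)
      simpa [hX0] using b
  refine tendsto_nhds_unique t1 ?_
  have : ∀ n, _ := fun n => h _ (cut_test X φ hX n)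
  simp only [this]
  exact t2

abbrev L2E (N : ℕ) := Lp (α := Esp N) ℂ 2 (volume : Measure (Esp N))

theorem Lp_norm_sq {N : ℕ} (f : L2E N) : ‖f‖ ^ 2 = ∫ x, ‖f x‖ ^ 2 := by
  have h := L2.inner_def (𝕜 := ℂ) f f
  rw [inner_self_eq_norm_sq_to_K] at h
  have h2 : ∀ x, inner ℂ (f x) (f x) = ((‖f x‖ ^ 2 : ℝ) : ℂ) := by
    intro x
    rw [inner_self_eq_norm_sq_to_K]; simp
  simp only [h2] at h
  rw [integral_complex_ofReal] at h
  exact Complex.ofReal_injective (by rw [← h]; simp)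

theorem plancherel_int {N : ℕ} {u : Esp N → ℂ} (hu : MemLp u 2 (volume : Measure (Esp N))) :
    ∫ x, ‖u x‖ ^ 2 = ∫ x, ‖(𝓕 (hu.toLp u) : L2E N) x‖ ^ 2 := by
  rw [← Lp_norm_sq, Lp.norm_fourier_eq, Lp_norm_sq]
  refine integral_congr_ae ?_
  filter_upwards [hu.coeFn_toLp] with x hx
  rw [hx]

theorem dS_fourier {N : ℕ} (i : Fin N) (ψ : 𝓢(Esp N, ℂ)) :
    dS i (𝓕 ψ) = 𝓕 (-(2 * Real.pi * Complex.I) • SchwartzMap.smulLeftCLM ℂ (fun x : Esp N => inner ℝ x (eb i)) ψ) :=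
  SchwartzMap.lineDerivOp_fourier_eq ψ (eb i)

/-- multiplier `-2πi ξ_i`. -/
def mS {N : ℕ} (i : Fin N) (ψ : 𝓢(Esp N, ℂ)) : 𝓢(Esp N, ℂ) :=
  -(2 * Real.pi * Complex.I) • SchwartzMap.smulLeftCLM ℂ (fun x : Esp N => inner ℝ x (eb i)) ψ

theorem mS_apply {N : ℕ} (i : Fin N) (ψ : 𝓢(Esp N, ℂ)) (x : Esp N) :
    mS i ψ x = -(2 * Real.pi * Complex.I) * ((x i : ℝ) * ψ x) := by
  have : (fun x : Esp N => inner ℝ x (eb i)).HasTemperateGrowth := by fun_prop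
  simp only [mS, smul_apply, SchwartzMap.smulLeftCLM_apply_apply this, smul_eq_mul]
  congr 1
  simp [EuclideanSpace.inner_single_right]

theorem pair_u {N : ℕ} {u : Esp N → ℂ} (hu : MemLp u 2 (volume : Measure (Esp N))) (ψ : 𝓢(Esp N, ℂ)) :
    ∫ x, u x * (𝓕 ψ) x = ∫ x, ψ x * (𝓕 (hu.toLp u) : L2E N) x := by
  rw [pairF]
  refine integral_congr_ae ?_
  filter_upwards [hu.coeFn_toLp] with x hx
  rw [hx, mul_comm]

theorem hat_grad {N : ℕ} {u v : Esp N → ℂ} {i : Fin N}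
    (hu : MemLp u 2 (volume : Measure (Esp N))) (hv : MemLp v 2 (volume : Measure (Esp N)))
    (h : IsWeakPDeriv u i v) :
    ⇑(𝓕 (hv.toLp v) : L2E N) =ᵐ[volume]
      fun ξ => ((2 * Real.pi * Complex.I) * (ξ i : ℝ)) * (𝓕 (hu.toLp u) : L2E N) ξ := by
  have hl := (Lp.memLp (𝓕 (hu.toLp u) : L2E N)).locallyIntegrable (by norm_num)
  refine ae_eq_of_schwartz ((Lp.memLp _).locallyIntegrable (by norm_num)) ?_ ?_
  · exact hl.continuous_smul (g := fun ξ : Esp N => ((2 * Real.pi * Complex.I) * (ξ i : ℝ))) (by fun_prop)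
  · intro ψ _
    have h1 := weak_pd_schwartz hu hv h (𝓕 ψ)
    rw [dS_fourier, pair_u hu, pair_u hv] at h1
    change ∫ x, mS i ψ x * _ = _ at h1
    rw [← neg_eq_iff_eq_neg] at h1
    rw [← h1, ← integral_neg]
    refine integral_congr_ae (ae_of_all _ fun x => ?_)
    simp only [mS_apply]
    ring

theorem hat_lap {N : ℕ} {u v : Esp N → ℂ}
    (hu : MemLp u 2 (volume : Measure (Esp N))) (hv : MemLp v 2 (volume : Measure (Esp N)))
    (h : IsWeakLap u v) :
    ⇑(𝓕 (hv.toLp v) : L2E N) =ᵐ[volume]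
      fun ξ => ((-(4 * Real.pi ^ 2 * ‖ξ‖ ^ 2) : ℝ) : ℂ) * (𝓕 (hu.toLp u) : L2E N) ξ := by
  have hl := (Lp.memLp (𝓕 (hu.toLp u) : L2E N)).locallyIntegrable (by norm_num)
  refine ae_eq_of_schwartz ((Lp.memLp _).locallyIntegrable (by norm_num)) ?_ ?_
  · exact hl.continuous_smul (g := fun ξ : Esp N => ((-(4 * Real.pi ^ 2 * ‖ξ‖ ^ 2) : ℝ) : ℂ)) (by fun_prop)
  · intro ψ _
    have h1 := weak_lap_schwartz hu hv h (𝓕 ψ)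
    have e : ∀ x, ∑ i, (dS i (dS i (𝓕 ψ))) x = (𝓕 (∑ i, mS i (mS i ψ))) x := by
      intro x
      have : ∀ i : Fin N, dS i (dS i (𝓕 ψ)) = 𝓕 (mS i (mS i ψ)) := by
        intro i
        rw [dS_fourier]; exact dS_fourier i _
      simp only [this]
      have h2 := map_sum (FourierTransform.fourierCLM ℂ 𝓢(Esp N, ℂ)) (fun i => mS i (mS i ψ)) Finset.univ
      simp only [FourierTransform.fourierCLM_apply] at h2
      rw [h2]; simp
    simp only [e] at h1
    rw [pair_u hu, pair_u hv] at h1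
    rw [← h1]
    refine integral_congr_ae (ae_of_all _ fun x => ?_)
    simp only [sum_apply, mS_apply]
    have e2 : ∀ i : Fin N, -(2 * (Real.pi:ℂ) * Complex.I) * ((x i : ℝ) * (-(2 * Real.pi * Complex.I) * ((x i : ℝ) * ψ x))) = (-(4 * (Real.pi:ℂ)^2) * ψ x) * ((x i : ℝ) : ℂ)^2 := by
      intro i
      linear_combination (4 * (Real.pi:ℂ)^2 * ψ x * ((x i : ℝ) : ℂ)^2) * Complex.I_sq
    simp only [e2]
    rw [← Finset.mul_sum, EuclideanSpace.norm_sq_eq]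
    push_cast
    simp only [Real.norm_eq_abs, ← Complex.ofReal_pow, sq_abs]
    ring

theorem H2_fourier {N : ℕ} (U : H2 N) : ∃ f : L2E N,
    (⇑(𝓕⁻ f : L2E N) =ᵐ[volume] U.u) ∧
    Integrable (fun ξ => ‖f ξ‖ ^ 2) ∧ Integrable (fun ξ => ‖ξ‖ ^ 2 * ‖f ξ‖ ^ 2) ∧
    Integrable (fun ξ => ‖ξ‖ ^ 4 * ‖f ξ‖ ^ 2) ∧
    U.massSq = ∫ ξ, ‖f ξ‖ ^ 2 ∧
    U.gradSq = (4 * Real.pi ^ 2) * ∫ ξ, ‖ξ‖ ^ 2 * ‖f ξ‖ ^ 2 ∧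
    U.lapSq = (16 * Real.pi ^ 4) * ∫ ξ, ‖ξ‖ ^ 4 * ‖f ξ‖ ^ 2 := by
  have intsq : ∀ g : L2E N, Integrable (fun ξ => ‖g ξ‖ ^ 2) :=
    fun g => (Lp.memLp g).integrable_norm_pow (by norm_num)
  have hg := fun i => hat_grad U.u_mem (U.grad_mem i) (U.grad_spec i)
  have hlp := hat_lap U.u_mem U.lapl_mem U.lapl_spec
  set f := (𝓕 (U.u_mem.toLp U.u) : L2E N) with hf
  have pi_pos := Real.pi_pos
  have hgi : ∀ i, Integrable (fun ξ : Esp N => (4 * Real.pi ^ 2) * (ξ i ^ 2 * ‖f ξ‖ ^ 2)) ∧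
      ∫ x, ‖U.grad i x‖ ^ 2 = ∫ ξ, (4 * Real.pi ^ 2) * ((ξ : Esp N) i ^ 2 * ‖f ξ‖ ^ 2) := by
    intro i
    have e : (fun ξ => ‖(𝓕 ((U.grad_mem i).toLp (U.grad i)) : L2E N) ξ‖ ^ 2)
      =ᵐ[volume] (fun ξ : Esp N => (4 * Real.pi ^ 2) * (ξ i ^ 2 * ‖f ξ‖ ^ 2)) := by
      filter_upwards [hg i] with ξ h
      rw [h]
      simp only [norm_mul, mul_pow, Complex.norm_I, Complex.norm_real, Real.norm_eq_abs, sq_abs,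
        Complex.norm_ofNat]
      ring
    refine ⟨(intsq _).congr e, ?_⟩
    rw [plancherel_int (U.grad_mem i)]
    exact integral_congr_ae e
  have eL : (fun ξ => ‖(𝓕 (U.lapl_mem.toLp U.lapl) : L2E N) ξ‖ ^ 2)
      =ᵐ[volume] (fun ξ : Esp N => (16 * Real.pi ^ 4) * (‖ξ‖ ^ 4 * ‖f ξ‖ ^ 2)) := by
    filter_upwards [hlp] with ξ h
    rw [h]
    simp only [norm_mul, mul_pow, Complex.norm_real, Real.norm_eq_abs, sq_abs]
    ring
  have hsum : ∀ ξ : Esp N, ‖ξ‖ ^ 2 * ‖f ξ‖ ^ 2 = (4 * Real.pi ^ 2)⁻¹ * ∑ i, (4 * Real.pi ^ 2) * (ξ i ^ 2 * ‖f ξ‖ ^ 2) := by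
    intro ξ
    rw [← Finset.mul_sum, ← Finset.sum_mul, EuclideanSpace.norm_sq_eq]
    simp only [Real.norm_eq_abs, sq_abs]
    field_simp
  refine ⟨f, ?_, intsq f, ?_, ?_, ?_, ?_, ?_⟩
  · rw [hf, FourierTransform.fourierInv_fourier_eq]
    exact U.u_mem.coeFn_toLp
  · simp only [hsum]
    exact (integrable_finsetSum _ fun i _ => (hgi i).1).const_mul _
  · have := ((intsq _).congr eL).const_mul (16 * Real.pi ^ 4)⁻¹
    refine this.congr (ae_of_all _ fun ξ => ?_)
    field_simp
  · exact plancherel_int U.u_mem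
  · simp only [hsum]
    rw [integral_const_mul, integral_finsetSum _ (fun i _ => (hgi i).1), H2.gradSq]
    simp only [(hgi _).2]
    field_simp
  · rw [H2.lapSq, plancherel_int U.lapl_mem, integral_congr_ae eL, integral_const_mul]

theorem plancherel_inv {N : ℕ} (g : L2E N) :
    ∫ x, ‖(𝓕⁻ g : L2E N) x‖ ^ 2 = ∫ x, ‖g x‖ ^ 2 := by
  rw [← Lp_norm_sq, ← Lp_norm_sq]
  congr 1
  exact (Lp.fourierTransformₗᵢ (Esp N) ℂ).symm.norm_map g

theorem L2_sq_int {N : ℕ} (g : L2E N) : Integrable (fun ξ => ‖g ξ‖ ^ 2) :=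
  (Lp.memLp g).integrable_norm_pow (by norm_num)

theorem plancherel_inv_lint {N : ℕ} (g : L2E N) :
    ∫⁻ x, ENNReal.ofReal (‖(𝓕⁻ g : L2E N) x‖ ^ 2) = ∫⁻ x, ENNReal.ofReal (‖g x‖ ^ 2) := by
  rw [← ofReal_integral_eq_lintegral_ofReal (L2_sq_int _) (ae_of_all _ fun x => by positivity),
    ← ofReal_integral_eq_lintegral_ofReal (L2_sq_int _) (ae_of_all _ fun x => by positivity),
    plancherel_inv]

/-- Frequency restriction of an `L²` function to a measurable set. -/
def cutL {N : ℕ} (f : L2E N) {S : Set (Esp N)} (hS : MeasurableSet S) : L2E N :=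
  ((Lp.memLp f).indicator hS).toLp (S.indicator f)

theorem cutL_ae {N : ℕ} (f : L2E N) {S : Set (Esp N)} (hS : MeasurableSet S) :
    ⇑(cutL f hS) =ᵐ[volume] S.indicator f := MemLp.coeFn_toLp _

theorem cutL_add {N : ℕ} (f : L2E N) {S : Set (Esp N)} (hS : MeasurableSet S) :
    cutL f hS + cutL f hS.compl = f := by
  apply Lp.ext
  filter_upwards [cutL_ae f hS, cutL_ae f hS.compl, Lp.coeFn_add (cutL f hS) (cutL f hS.compl)]
    with x h1 h2 h3
  rw [h3, Pi.add_apply, h1, h2]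
  exact congrFun (Set.indicator_self_add_compl S f) x

theorem cutL_inv_add {N : ℕ} (f : L2E N) {S : Set (Esp N)} (hS : MeasurableSet S) :
    ∀ᵐ x ∂(volume : Measure (Esp N)), (𝓕⁻ f : L2E N) x =
      (𝓕⁻ (cutL f hS) : L2E N) x + (𝓕⁻ (cutL f hS.compl) : L2E N) x := by
  have h : (𝓕⁻ f : L2E N) = 𝓕⁻ (cutL f hS) + 𝓕⁻ (cutL f hS.compl) := by
    rw [← FourierTransform.fourierInv_add, cutL_add]
  filter_upwards [Lp.coeFn_add (𝓕⁻ (cutL f hS) : L2E N) (𝓕⁻ (cutL f hS.compl))] with x hx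
  rw [h, hx, Pi.add_apply]

theorem level {N : ℕ} (f : L2E N) {A t V : ℝ} (ht : 0 < t)
    (hV : volume (Metric.ball (0 : Esp N) A) = ENNReal.ofReal V) (hV0 : 0 ≤ V)
    (hM : 0 < ∫ ξ, ‖f ξ‖ ^ 2) (hA : 4 * V * ∫ ξ, ‖f ξ‖ ^ 2 = t ^ 2) :
    volume {x | t < ‖(𝓕⁻ f : L2E N) x‖} ≤
      ENNReal.ofReal (4 / t ^ 2) * ∫⁻ ξ in (Metric.ball (0 : Esp N) A)ᶜ, ENNReal.ofReal (‖f ξ‖ ^ 2) := by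
  set S := Metric.ball (0 : Esp N) A
  set M := ∫ ξ, ‖f ξ‖ ^ 2 with hMdef
  have hS : MeasurableSet S := measurableSet_ball
  have hfin : volume S ≠ ⊤ := by rw [hV]; exact ENNReal.ofReal_ne_top
  have : IsFiniteMeasure (volume.restrict S) := ⟨by simpa using hfin.lt_top⟩
  have hint : IntegrableOn f S := ((Lp.memLp f).restrict S).integrable (by norm_num)
  have hlowint : Integrable (cutL f hS) := (integrable_indicator_iff hS |>.2 hint).congr (cutL_ae f hS).symm
  have hlow : ∫ y, ‖(cutL f hS) y‖ ≤ t / 2 := by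
    have e1 : ∫ y, ‖(cutL f hS) y‖ = ∫ y in S, ‖f y‖ := by
      rw [← integral_indicator hS]
      refine integral_congr_ae ?_
      filter_upwards [cutL_ae f hS] with x hx
      rw [hx, norm_indicator_eq_indicator_norm]
    rw [e1]
    have hb : ∀ y, ‖f y‖ ≤ M / t + t / (4 * M) * ‖f y‖ ^ 2 := by
      intro y
      have : M / t + t / (4 * M) * ‖f y‖ ^ 2 - ‖f y‖ = (t * ‖f y‖ - 2 * M) ^ 2 / (4 * M * t) := by
        field_simp; ring
      have h2 : 0 ≤ (t * ‖f y‖ - 2 * M) ^ 2 / (4 * M * t) := by positivity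
      linarith
    calc ∫ y in S, ‖f y‖ ≤ ∫ y in S, (M / t + t / (4 * M) * ‖f y‖ ^ 2) := by
          refine integral_mono hint.norm ?_ hb
          exact (integrable_const _).add ((L2_sq_int f).integrableOn.const_mul _)
      _ = V * (M / t) + t / (4 * M) * ∫ y in S, ‖f y‖ ^ 2 := by
          rw [integral_add (integrable_const _) ((L2_sq_int f).integrableOn.const_mul _),
            integral_const_mul, setIntegral_const, Measure.real, hV, ENNReal.toReal_ofReal hV0,
            smul_eq_mul]
      _ ≤ V * (M / t) + t / (4 * M) * M := by
          gcongr
          exact setIntegral_le_integral (L2_sq_int f) (ae_of_all _ fun x => by positivity)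
      _ = t / 2 := by
          field_simp
          linear_combination 2 * hA
  set g := cutL f hS.compl
  have hsub : ∀ᵐ x ∂(volume : Measure (Esp N)), t < ‖(𝓕⁻ f : L2E N) x‖ →
      ENNReal.ofReal (t ^ 2 / 4) ≤ ENNReal.ofReal (‖(𝓕⁻ g : L2E N) x‖ ^ 2) := by
    filter_upwards [cutL_inv_add f hS, fourierInv_bound _ hlowint] with x h1 h2 h3
    apply ENNReal.ofReal_le_ofReal
    rw [h1] at h3
    have h4 := norm_add_le ((𝓕⁻ (cutL f hS) : L2E N) x) ((𝓕⁻ (cutL f hS.compl) : L2E N) x)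
    have h5 : t / 2 ≤ ‖(𝓕⁻ g : L2E N) x‖ := by linarith
    have h6 := pow_le_pow_left₀ (by positivity) h5 2
    linarith [h6, div_pow t 2 2]
  calc volume {x | t < ‖(𝓕⁻ f : L2E N) x‖}
      ≤ volume {x | ENNReal.ofReal (t ^ 2 / 4) ≤ ENNReal.ofReal (‖(𝓕⁻ g : L2E N) x‖ ^ 2)} :=
        measure_mono_ae hsub
    _ ≤ (∫⁻ x, ENNReal.ofReal (‖(𝓕⁻ g : L2E N) x‖ ^ 2)) / ENNReal.ofReal (t ^ 2 / 4) := by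
        refine meas_ge_le_lintegral_div ?_ ?_ ENNReal.ofReal_ne_top
        · exact (L2_sq_int _).1.aemeasurable.ennreal_ofReal
        · simp; positivity
    _ = ENNReal.ofReal (4 / t ^ 2) * ∫⁻ x, ENNReal.ofReal (‖g x‖ ^ 2) := by
        rw [plancherel_inv_lint, ENNReal.div_eq_inv_mul, ← ENNReal.ofReal_inv_of_pos (by positivity),
          inv_div]
    _ = _ := by
        congr 1
        rw [← lintegral_indicator hS.compl]
        refine lintegral_congr_ae ?_
        filter_upwards [cutL_ae f hS.compl] with x hx
        rw [hx]
        by_cases h : x ∈ Sᶜ <;> simp [h]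

theorem GN_fourier (N : ℕ) (hN : 1 ≤ N) (σ : ℝ) (hσ : σ = 4 / (N : ℝ)) :
    ∃ C : ℝ, 0 < C ∧ ∀ f : L2E N,
    ∫⁻ x, ENNReal.ofReal (‖(𝓕⁻ f : L2E N) x‖ ^ (2 * σ + 2)) ≤
      ENNReal.ofReal (C * (∫ ξ, ‖f ξ‖ ^ 2) ^ σ) * ∫⁻ ξ, ENNReal.ofReal (‖ξ‖ ^ 4 * ‖f ξ‖ ^ 2) := by
  have hNpos : (0 : ℝ) < N := by exact_mod_cast hN
  have hσ0 : 0 < σ := by rw [hσ]; positivity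
  have : Nonempty (Fin N) := ⟨⟨0, hN⟩⟩
  have : Nontrivial (Esp N) := inferInstance
  set c := (volume (Metric.ball (0 : Esp N) 1)).toReal with hc
  have hc0 : 0 < c := ENNReal.toReal_pos (Metric.measure_ball_pos _ _ one_pos).ne' measure_ball_lt_top.ne
  refine ⟨(2 * σ + 2) * (4 / (2 * σ)) * (4 * c) ^ σ, by positivity, fun f => ?_⟩
  set M := ∫ ξ, ‖f ξ‖ ^ 2 with hMdef
  have hM0 : 0 ≤ M := integral_nonneg fun x => by positivity
  rcases hM0.eq_or_lt with hM | hM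
  · have h1 : ‖f‖ ^ 2 = 0 := by rw [Lp_norm_sq, ← hMdef, ← hM]
    have h2 : f = 0 := norm_eq_zero.1 (pow_eq_zero_iff (by norm_num) |>.1 h1)
    have h3 : (𝓕⁻ f : L2E N) = 0 := by
      rw [h2]; exact (Lp.fourierTransformₗᵢ (Esp N) ℂ).symm.map_zero
    have h4 : ∫⁻ x, ENNReal.ofReal (‖(𝓕⁻ f : L2E N) x‖ ^ (2 * σ + 2)) = 0 := by
      rw [h3]
      rw [lintegral_eq_zero_of_ae_eq_zero]
      filter_upwards [Lp.coeFn_zero (E := ℂ) (p := 2) (μ := (volume : Measure (Esp N)))] with x hx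
      rw [hx]
      simp [Real.zero_rpow (by positivity : 2 * σ + 2 ≠ 0)]
    rw [h4]; exact zero_le
  -- main case
  set T : Esp N → ℝ := fun ξ => Real.sqrt (4 * c * M * ‖ξ‖ ^ N) with hT
  have hTc : Continuous T := by fun_prop
  have hlev : ∀ t : ℝ, 0 < t → volume {x | t < ‖(𝓕⁻ f : L2E N) x‖} ≤
      ENNReal.ofReal (4 / t ^ 2) *
        ∫⁻ ξ, (if t ≤ T ξ then ENNReal.ofReal (‖f ξ‖ ^ 2) else 0) := by
    intro t ht
    set A : ℝ := (t ^ 2 / (4 * c * M)) ^ (1 / (N : ℝ)) with hA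
    have hApos : 0 < A := by positivity
    have hAN : A ^ N = t ^ 2 / (4 * c * M) := by
      rw [hA, ← Real.rpow_natCast, ← Real.rpow_mul (by positivity)]
      rw [one_div_mul_cancel hNpos.ne', Real.rpow_one]
    have hV : volume (Metric.ball (0 : Esp N) A) = ENNReal.ofReal (A ^ N * c) := by
      rw [Measure.addHaar_ball _ _ hApos.le, ENNReal.ofReal_mul (by positivity), hc,
        ENNReal.ofReal_toReal measure_ball_lt_top.ne]
      simp
    refine (level f ht hV (by positivity) hM ?_).trans ?_
    · rw [hAN]; field_simp; exact hMdef.symm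
    · refine mul_le_mul' le_rfl ?_
      rw [← lintegral_indicator measurableSet_ball.compl]
      refine lintegral_mono fun ξ => ?_
      by_cases h : ξ ∈ (Metric.ball (0 : Esp N) A)ᶜ
      · have : t ≤ T ξ := by
          apply Real.le_sqrt_of_sq_le
          have h2 : A ≤ ‖ξ‖ := by simpa using h
          have h3 := pow_le_pow_left₀ hApos.le h2 N
          rw [hAN, div_le_iff₀ (by positivity)] at h3
          linarith
        simp [h, this]
      · simp [h]
  have hm : AEMeasurable (fun x => ‖(𝓕⁻ f : L2E N) x‖) (volume : Measure (Esp N)) :=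
    (Lp.aestronglyMeasurable _).norm.aemeasurable
  rw [lintegral_rpow_eq_lintegral_meas_lt_mul _ (ae_of_all _ fun x => norm_nonneg _) hm (by positivity)]
  have hfm : AEMeasurable (fun ξ => ENNReal.ofReal (‖f ξ‖ ^ 2)) (volume : Measure (Esp N)) :=
    (L2_sq_int _).1.aemeasurable.ennreal_ofReal
  have step1 : ∫⁻ t in Set.Ioi (0 : ℝ), volume {x | t < ‖(𝓕⁻ f : L2E N) x‖} *
        ENNReal.ofReal (t ^ (2 * σ + 2 - 1)) ≤
      ∫⁻ t in Set.Ioi (0 : ℝ), ∫⁻ ξ, (if t ≤ T ξ then ENNReal.ofReal (4 * t ^ (2 * σ - 1)) else 0) *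
        ENNReal.ofReal (‖f ξ‖ ^ 2) := by
    refine setLIntegral_mono' measurableSet_Ioi fun t ht => ?_
    have ht : 0 < t := ht
    calc _ ≤ (ENNReal.ofReal (4 / t ^ 2) *
        ∫⁻ ξ, (if t ≤ T ξ then ENNReal.ofReal (‖f ξ‖ ^ 2) else 0)) *
          ENNReal.ofReal (t ^ (2 * σ + 2 - 1)) := by gcongr; exact hlev t ht
      _ = ENNReal.ofReal (4 * t ^ (2 * σ - 1)) *
        ∫⁻ ξ, (if t ≤ T ξ then ENNReal.ofReal (‖f ξ‖ ^ 2) else 0) := by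
          rw [mul_right_comm, ← ENNReal.ofReal_mul (by positivity)]
          congr 2
          rw [show 2 * σ + 2 - 1 = (2 * σ - 1) + 2 by ring, Real.rpow_add ht, Real.rpow_two]
          field_simp
      _ = _ := by
          rw [← lintegral_const_mul' _ _ ENNReal.ofReal_ne_top]
          refine lintegral_congr fun ξ => ?_
          split_ifs <;> simp
  have inner : ∀ ξ, ∫⁻ t in Set.Ioi (0 : ℝ), (if t ≤ T ξ then ENNReal.ofReal (4 * t ^ (2 * σ - 1)) else 0)
      = ENNReal.ofReal ((4 / (2 * σ)) * (4 * c * M) ^ σ * ‖ξ‖ ^ 4) := by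
    intro ξ
    have hT0 : 0 ≤ T ξ := Real.sqrt_nonneg _
    have e1 : ∫⁻ t in Set.Ioi (0 : ℝ), (if t ≤ T ξ then ENNReal.ofReal (4 * t ^ (2 * σ - 1)) else 0)
        = ∫⁻ t in Set.Ioc 0 (T ξ), ENNReal.ofReal (4 * t ^ (2 * σ - 1)) := by
      rw [← Set.Ioi_inter_Iic, Set.inter_comm, ← Measure.restrict_restrict measurableSet_Iic,
        ← lintegral_indicator measurableSet_Iic]
      refine lintegral_congr fun t => ?_
      simp [Set.indicator_apply]
    have hii : IntervalIntegrable (fun t : ℝ => t ^ (2 * σ - 1)) volume 0 (T ξ) :=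
      intervalIntegral.intervalIntegrable_rpow' (by linarith)
    have hion : IntegrableOn (fun t : ℝ => 4 * t ^ (2 * σ - 1)) (Set.Ioc 0 (T ξ)) :=
      ((intervalIntegrable_iff_integrableOn_Ioc_of_le hT0).1 hii).const_mul 4
    rw [e1, ← ofReal_integral_eq_lintegral_ofReal hion]
    · rw [integral_const_mul, ← intervalIntegral.integral_of_le hT0, integral_rpow (Or.inl (by linarith))]
      congr 1
      rw [show 2 * σ - 1 + 1 = 2 * σ by ring, Real.zero_rpow (by positivity), sub_zero,
        Real.rpow_mul hT0, Real.rpow_two, hT]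
      simp only
      rw [Real.sq_sqrt (by positivity), Real.mul_rpow (by positivity) (by positivity),
        ← Real.rpow_natCast ‖ξ‖ N, ← Real.rpow_mul (norm_nonneg _), hσ,
        mul_div_cancel₀ _ hNpos.ne']
      rw [show (4 : ℝ) = ((4 : ℕ) : ℝ) by norm_num, Real.rpow_natCast]
      ring
    · filter_upwards [ae_restrict_mem measurableSet_Ioc] with t ht
      have : 0 < t := ht.1
      simp only [Pi.zero_apply]
      positivity
  have step2 : ∫⁻ t in Set.Ioi (0 : ℝ), ∫⁻ ξ, (if t ≤ T ξ then ENNReal.ofReal (4 * t ^ (2 * σ - 1)) else 0) *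
        ENNReal.ofReal (‖f ξ‖ ^ 2) =
      ENNReal.ofReal ((4 / (2 * σ)) * (4 * c * M) ^ σ) * ∫⁻ ξ, ENNReal.ofReal (‖ξ‖ ^ 4 * ‖f ξ‖ ^ 2) := by
    rw [lintegral_lintegral_swap]
    · rw [← lintegral_const_mul' _ _ ENNReal.ofReal_ne_top]
      refine lintegral_congr fun ξ => ?_
      rw [lintegral_mul_const' _ _ ENNReal.ofReal_ne_top, inner, ← ENNReal.ofReal_mul (by positivity),
        ← ENNReal.ofReal_mul (by positivity), mul_assoc]
    · refine AEMeasurable.mul ?_ ?_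
      · apply Measurable.aemeasurable
        refine Measurable.ite ?_ (by fun_prop) measurable_const
        exact measurableSet_le measurable_fst (hTc.measurable.comp measurable_snd)
      · exact hfm.comp_snd
  calc _ ≤ ENNReal.ofReal (2 * σ + 2) * (ENNReal.ofReal ((4 / (2 * σ)) * (4 * c * M) ^ σ) * ∫⁻ ξ, ENNReal.ofReal (‖ξ‖ ^ 4 * ‖f ξ‖ ^ 2)) := by
        rw [← step2]; gcongr
    _ = _ := by
        rw [← mul_assoc, ← ENNReal.ofReal_mul (by positivity), Real.mul_rpow (by positivity) hM0]
        congr 2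
        ring

theorem pPow_le_of {N : ℕ} (U : H2 N) (f : L2E N) (hf : ⇑(𝓕⁻ f : L2E N) =ᵐ[volume] U.u) (σ b : ℝ)
    (hb : 0 ≤ b)
    (h : ∫⁻ x, ENNReal.ofReal (‖(𝓕⁻ f : L2E N) x‖ ^ (2 * σ + 2)) ≤ ENNReal.ofReal b) :
    U.pPow σ ≤ b := by
  have e : U.pPow σ = ∫ x, ‖(𝓕⁻ f : L2E N) x‖ ^ (2 * σ + 2) := by
    refine integral_congr_ae ?_
    filter_upwards [hf] with x hx
    rw [hx]
  rw [e, integral_eq_lintegral_of_nonneg_ae (ae_of_all _ fun x => by positivity)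
    (((Lp.aestronglyMeasurable _).norm.aemeasurable.pow_const _).aestronglyMeasurable)]
  exact ENNReal.toReal_le_of_le_ofReal hb h

theorem massSq_nonneg {N : ℕ} (U : H2 N) : 0 ≤ U.massSq := integral_nonneg fun x => by positivity
theorem lapSq_nonneg {N : ℕ} (U : H2 N) : 0 ≤ U.lapSq := integral_nonneg fun x => by positivity
theorem gradSq_nonneg {N : ℕ} (U : H2 N) : 0 ≤ U.gradSq :=
  Finset.sum_nonneg fun i _ => integral_nonneg fun x => by positivity
theorem pPow_nonneg {N : ℕ} (U : H2 N) (σ : ℝ) : 0 ≤ U.pPow σ :=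
  integral_nonneg fun x => by positivity

theorem GN1 (N : ℕ) (hN : 1 ≤ N) (σ : ℝ) (hσ : σ = 4 / (N : ℝ)) :
    ∃ C : ℝ, 0 < C ∧ ∀ U : H2 N, U.pPow σ ≤ C * (U.lapSq * U.massSq ^ σ) := by
  obtain ⟨C, hC, h⟩ := GN_fourier N hN σ hσ
  refine ⟨C / (16 * Real.pi ^ 4), by positivity, fun U => ?_⟩
  obtain ⟨f, hf, i0, i2, i4, hm, hg, hl⟩ := H2_fourier U
  have hm0 := massSq_nonneg U
  have hl0 := lapSq_nonneg U
  refine pPow_le_of U f hf σ _ (by positivity) ((h f).trans ?_)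
  rw [← ofReal_integral_eq_lintegral_ofReal i4 (ae_of_all _ fun x => by positivity), ← hm,
    ← ENNReal.ofReal_mul (by positivity), hl]
  apply ENNReal.ofReal_le_ofReal
  apply le_of_eq
  field_simp

theorem grad_sq_le {N : ℕ} (U : H2 N) : U.gradSq ^ 2 ≤ U.lapSq * U.massSq := by
  obtain ⟨f, hf, i0, i2, i4, hm, hg, hl⟩ := H2_fourier U
  set l := ∫ ξ : Esp N, ‖ξ‖ ^ 4 * ‖f ξ‖ ^ 2
  set g := ∫ ξ : Esp N, ‖ξ‖ ^ 2 * ‖f ξ‖ ^ 2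
  set m := ∫ ξ : Esp N, ‖f ξ‖ ^ 2
  have key : ∀ s : ℝ, 0 ≤ l * (s * s) + (-2 * g) * s + m := by
    intro s
    have e : l * (s * s) + (-2 * g) * s + m =
        ∫ ξ : Esp N, (s * ‖ξ‖ ^ 2 - 1) ^ 2 * ‖f ξ‖ ^ 2 := by
      have : (fun ξ : Esp N => (s * ‖ξ‖ ^ 2 - 1) ^ 2 * ‖f ξ‖ ^ 2) = fun ξ =>
          ((s * s) * (‖ξ‖ ^ 4 * ‖f ξ‖ ^ 2) + (-2 * s) * (‖ξ‖ ^ 2 * ‖f ξ‖ ^ 2)) + ‖f ξ‖ ^ 2 := by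
        funext ξ; ring
      have j : Integrable (fun ξ : Esp N =>
          (s * s) * (‖ξ‖ ^ 4 * ‖f ξ‖ ^ 2) + (-2 * s) * (‖ξ‖ ^ 2 * ‖f ξ‖ ^ 2)) :=
        (i4.const_mul _).add (i2.const_mul _)
      rw [this, integral_add j i0,
        integral_add (i4.const_mul _) (i2.const_mul _), integral_const_mul, integral_const_mul]
      ring
    rw [e]
    exact integral_nonneg fun x => by positivity
  have hd := discrim_le_zero key
  rw [discrim] at hd
  rw [hg, hl, hm]
  have : 0 < Real.pi ^ 4 := by positivity
  nlinarith

theorem add_rpow_le' {a b p : ℝ} (ha : 0 ≤ a) (hb : 0 ≤ b) (hp : 0 ≤ p) :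
    (a + b) ^ p ≤ 2 ^ p * (a ^ p + b ^ p) := by
  have ha' := Real.rpow_nonneg ha p
  have hb' := Real.rpow_nonneg hb p
  have h2 : (0 : ℝ) ≤ 2 ^ p := by positivity
  rcases le_total a b with h | h
  · calc (a + b) ^ p ≤ (2 * b) ^ p := Real.rpow_le_rpow (by positivity) (by linarith) hp
      _ = 2 ^ p * b ^ p := Real.mul_rpow (by norm_num) hb
      _ ≤ _ := by gcongr; linarith
  · calc (a + b) ^ p ≤ (2 * a) ^ p := Real.rpow_le_rpow (by positivity) (by linarith) hp
      _ = 2 ^ p * a ^ p := Real.mul_rpow (by norm_num) ha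
      _ ≤ _ := by gcongr; linarith

theorem GN2 (N : ℕ) (hN : 1 ≤ N) (σ : ℝ) (hσ : σ = 4 / (N : ℝ)) :
    ∃ C : ℝ, 0 < C ∧ ∀ U : H2 N,
      U.pPow σ ≤ C * (U.gradSq * U.massSq ^ σ + U.lapSq * U.gradSq ^ σ) := by
  have hNpos : (0 : ℝ) < N := by exact_mod_cast hN
  have hσ0 : 0 < σ := by rw [hσ]; positivity
  obtain ⟨C, hC, h⟩ := GN_fourier N hN σ hσ
  refine ⟨2 ^ (2 * σ + 2) * C, by positivity, fun U => ?_⟩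
  obtain ⟨f, hf, i0, i2, i4, hm, hg, hl⟩ := H2_fourier U
  have hm0 := massSq_nonneg U
  have hl0 := lapSq_nonneg U
  have hg0 := gradSq_nonneg U
  set S := Metric.ball (0 : Esp N) 1
  have hS : MeasurableSet S := measurableSet_ball
  have hpi : (1 : ℝ) ≤ Real.pi := by linarith [Real.pi_gt_three]
  have hgi : ∫ ξ : Esp N, ‖ξ‖ ^ 2 * ‖f ξ‖ ^ 2 ≤ U.gradSq := by
    rw [hg]
    have : (0 : ℝ) ≤ ∫ ξ : Esp N, ‖ξ‖ ^ 2 * ‖f ξ‖ ^ 2 := integral_nonneg fun x => by positivity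
    exact le_mul_of_one_le_left this (by nlinarith)
  have hli : ∫ ξ : Esp N, ‖ξ‖ ^ 4 * ‖f ξ‖ ^ 2 ≤ U.lapSq := by
    rw [hl]
    have : (0 : ℝ) ≤ ∫ ξ : Esp N, ‖ξ‖ ^ 4 * ‖f ξ‖ ^ 2 := integral_nonneg fun x => by positivity
    have h4 : 1 ≤ Real.pi ^ 4 := one_le_pow₀ hpi
    exact le_mul_of_one_le_left this (by linarith)
  -- low frequency
  have a1 : ∫ ξ, ‖cutL f hS ξ‖ ^ 2 ≤ U.massSq := by
    rw [hm]
    refine integral_mono_ae (L2_sq_int _) i0 ?_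
    filter_upwards [cutL_ae f hS] with ξ hξ
    rw [hξ]
    by_cases hx : ξ ∈ S <;> simp [hx]
  have a2 : ∫⁻ ξ, ENNReal.ofReal (‖ξ‖ ^ 4 * ‖cutL f hS ξ‖ ^ 2) ≤ ENNReal.ofReal U.gradSq := by
    refine le_trans ?_ (ENNReal.ofReal_le_ofReal hgi)
    rw [ofReal_integral_eq_lintegral_ofReal i2 (ae_of_all _ fun x => by positivity)]
    refine lintegral_mono_ae ?_
    filter_upwards [cutL_ae f hS] with ξ hξ
    apply ENNReal.ofReal_le_ofReal
    rw [hξ]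
    by_cases hx : ξ ∈ S
    · simp only [hx, Set.indicator_of_mem]
      have : ‖ξ‖ ≤ 1 := by have : ‖ξ‖ < 1 := by simpa [S] using hx
                           exact this.le
      gcongr ?_ * _
      exact pow_le_pow_of_le_one (norm_nonneg _) this (by norm_num)
    · simp [hx]; positivity
  have b1 : ∫ ξ, ‖cutL f hS.compl ξ‖ ^ 2 ≤ U.gradSq := by
    refine le_trans ?_ hgi
    refine integral_mono_ae (L2_sq_int _) i2 ?_
    filter_upwards [cutL_ae f hS.compl] with ξ hξ
    rw [hξ]
    by_cases hx : ξ ∈ S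
    · simp [hx]; positivity
    · have h1 : 1 ≤ ‖ξ‖ := by simpa [S] using hx
      have h2 : 1 ≤ ‖ξ‖ ^ 2 := one_le_pow₀ h1
      have h3 : ξ ∈ Sᶜ := hx
      simp only [h3, Set.indicator_of_mem]
      nlinarith [sq_nonneg ‖f ξ‖]
  have b2 : ∫⁻ ξ, ENNReal.ofReal (‖ξ‖ ^ 4 * ‖cutL f hS.compl ξ‖ ^ 2) ≤ ENNReal.ofReal U.lapSq := by
    refine le_trans ?_ (ENNReal.ofReal_le_ofReal hli)
    rw [ofReal_integral_eq_lintegral_ofReal i4 (ae_of_all _ fun x => by positivity)]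
    refine lintegral_mono_ae ?_
    filter_upwards [cutL_ae f hS.compl] with ξ hξ
    apply ENNReal.ofReal_le_ofReal
    rw [hξ]
    by_cases hx : ξ ∈ S
    · simp [hx]; positivity
    · simp [hx]
  have n1 : 0 ≤ ∫ ξ, ‖cutL f hS ξ‖ ^ 2 := integral_nonneg fun x => by positivity
  have n2 : 0 ≤ ∫ ξ, ‖cutL f hS.compl ξ‖ ^ 2 := integral_nonneg fun x => by positivity
  have c1 := (h (cutL f hS)).trans (mul_le_mul' (ENNReal.ofReal_le_ofReal
    (mul_le_mul_of_nonneg_left (Real.rpow_le_rpow n1 a1 hσ0.le) hC.le)) a2)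
  have c2 := (h (cutL f hS.compl)).trans (mul_le_mul' (ENNReal.ofReal_le_ofReal
    (mul_le_mul_of_nonneg_left (Real.rpow_le_rpow n2 b1 hσ0.le) hC.le)) b2)
  rw [← ENNReal.ofReal_mul (by positivity)] at c1 c2
  refine pPow_le_of U f hf σ _ (by positivity) ?_
  calc ∫⁻ x, ENNReal.ofReal (‖(𝓕⁻ f : L2E N) x‖ ^ (2 * σ + 2))
      ≤ ∫⁻ x, ENNReal.ofReal (2 ^ (2 * σ + 2)) *
          (ENNReal.ofReal (‖(𝓕⁻ (cutL f hS) : L2E N) x‖ ^ (2 * σ + 2)) +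
          ENNReal.ofReal (‖(𝓕⁻ (cutL f hS.compl) : L2E N) x‖ ^ (2 * σ + 2))) := by
        refine lintegral_mono_ae ?_
        filter_upwards [cutL_inv_add f hS] with x hx
        rw [← ENNReal.ofReal_add (by positivity) (by positivity), ← ENNReal.ofReal_mul (by positivity)]
        apply ENNReal.ofReal_le_ofReal
        rw [hx]
        refine (Real.rpow_le_rpow (norm_nonneg _) (norm_add_le _ _) (by positivity)).trans ?_
        exact add_rpow_le' (norm_nonneg _) (norm_nonneg _) (by positivity)
    _ = ENNReal.ofReal (2 ^ (2 * σ + 2)) *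
          ((∫⁻ x, ENNReal.ofReal (‖(𝓕⁻ (cutL f hS) : L2E N) x‖ ^ (2 * σ + 2))) +
          ∫⁻ x, ENNReal.ofReal (‖(𝓕⁻ (cutL f hS.compl) : L2E N) x‖ ^ (2 * σ + 2))) := by
        rw [lintegral_const_mul' _ _ ENNReal.ofReal_ne_top, lintegral_add_left']
        exact ((Lp.aestronglyMeasurable
          (𝓕⁻ (cutL f hS) : L2E N)).norm.aemeasurable.pow_const (2 * σ + 2)).ennreal_ofReal
    _ ≤ ENNReal.ofReal (2 ^ (2 * σ + 2)) * (ENNReal.ofReal (C * U.massSq ^ σ * U.gradSq) +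
          ENNReal.ofReal (C * U.gradSq ^ σ * U.lapSq)) := by gcongr
    _ = _ := by
        rw [← ENNReal.ofReal_add (by positivity) (by positivity), ← ENNReal.ofReal_mul (by positivity)]
        congr 1
        ring

theorem memLp_dil {N : ℕ} {u : Esp N → ℂ} (hu : MemLp u 2 (volume : Measure (Esp N))) (c : ℂ)
    {l : ℝ} (hl : 0 < l) : MemLp (fun x => c * u (l • x)) 2 (volume : Measure (Esp N)) := by
  refine MemLp.const_mul ?_ c
  have h : MemLp u 2 (Measure.map (l • ·) (volume : Measure (Esp N))) := by
    rw [Measure.map_addHaar_smul _ hl.ne']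
    exact hu.smul_measure ENNReal.ofReal_ne_top
  exact h.comp_of_map (measurable_const_smul l).aemeasurable

theorem testFun_dil {N : ℕ} {φ : Esp N → ℂ} (h : TestFun φ) {l : ℝ} (hl : l ≠ 0) :
    TestFun (fun x => φ (l • x)) := by
  refine ⟨?_, ?_⟩
  · have := h.1
    fun_prop
  · exact h.2.comp_homeomorph (Homeomorph.smulOfNeZero l hl)

theorem int_dil {N : ℕ} (F : Esp N → ℂ) {l : ℝ} (hl : 0 < l) :
    ∫ x, F (l • x) = (((l ^ N)⁻¹ : ℝ) : ℂ) * ∫ x, F x := by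
  rw [Measure.integral_comp_smul_of_nonneg _ _ _ (hR := hl.le)]
  simp

theorem int_dil_real {N : ℕ} (F : Esp N → ℝ) {l : ℝ} (hl : 0 < l) :
    ∫ x, F (l • x) = (l ^ N)⁻¹ * ∫ x, F x := by
  rw [Measure.integral_comp_smul_of_nonneg _ _ _ (hR := hl.le)]
  simp

theorem pd_dil {N : ℕ} {u v : Esp N → ℂ} {i : Fin N} (h : IsWeakPDeriv u i v) (a : ℂ)
    {l : ℝ} (hl : 0 < l) :
    IsWeakPDeriv (fun x => a * u (l • x)) i (fun x => (a * l) * v (l • x)) := by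
  intro φ hφ
  have hne : (l : ℂ) ≠ 0 := by exact_mod_cast hl.ne'
  have h1 := h _ (testFun_dil hφ (inv_ne_zero hl.ne'))
  rw [pderivC_scale] at h1
  have e1 : ∫ x, (a * u (l • x)) * pderivC i φ x =
      ∫ x, (fun y => (a * l) * (u y * (((l⁻¹ : ℝ) : ℂ) * pderivC i φ (l⁻¹ • y)))) (l • x) := by
    refine integral_congr_ae (ae_of_all _ fun x => ?_)
    simp only [inv_smul_smul₀ hl.ne']
    push_cast
    field_simp
  have e2 : ∫ x, ((a * l) * v (l • x)) * φ x =
      ∫ x, (fun y => (a * l) * (v y * φ (l⁻¹ • y))) (l • x) := by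
    refine integral_congr_ae (ae_of_all _ fun x => ?_)
    simp only [inv_smul_smul₀ hl.ne']
    ring
  have f1 := e1.trans (int_dil (fun y => (a * l) * (u y * (((l⁻¹ : ℝ) : ℂ) * pderivC i φ (l⁻¹ • y)))) hl)
  have f2 := e2.trans (int_dil (fun y => (a * l) * (v y * φ (l⁻¹ • y))) hl)
  rw [f1, f2, integral_const_mul, integral_const_mul, h1]
  ring

theorem lapC_dil {N : ℕ} {φ : Esp N → ℂ} (hφ : TestFun φ) (l : ℝ) :
    lapC (fun x => φ (l • x)) = fun x => (l : ℂ) * l * lapC φ (l • x) := by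
  funext x
  unfold lapC
  rw [Finset.mul_sum]
  refine Finset.sum_congr rfl fun i _ => ?_
  rw [pderivC_scale]
  have hd : Differentiable ℝ (pderivC i φ) := by
    have : ContDiff ℝ 1 (pderivC i φ) := by
      unfold pderivC
      exact (hφ.1.fderiv_right (m := 1) (by norm_cast)).clm_apply contDiff_const
    exact this.differentiable (by norm_num)
  rw [pderivC_const_mul i (f := fun x => pderivC i φ (l • x)) (by fun_prop), pderivC_scale]
  ring

theorem lap_dil {N : ℕ} {u v : Esp N → ℂ} (h : IsWeakLap u v) (a : ℂ)
    {l : ℝ} (hl : 0 < l) :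
    IsWeakLap (fun x => a * u (l • x)) (fun x => (a * l ^ 2) * v (l • x)) := by
  intro φ hφ
  have hne : (l : ℂ) ≠ 0 := by exact_mod_cast hl.ne'
  have h1 := h _ (testFun_dil hφ (inv_ne_zero hl.ne'))
  rw [lapC_dil hφ] at h1
  have e1 : ∫ x, (a * u (l • x)) * lapC φ x =
      ∫ x, (fun y => (a * l ^ 2) * (u y * (((l⁻¹ : ℝ) : ℂ) * ((l⁻¹ : ℝ) : ℂ) * lapC φ (l⁻¹ • y)))) (l • x) := by
    refine integral_congr_ae (ae_of_all _ fun x => ?_)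
    simp only [inv_smul_smul₀ hl.ne']
    push_cast
    field_simp
  have e2 : ∫ x, ((a * l ^ 2) * v (l • x)) * φ x =
      ∫ x, (fun y => (a * l ^ 2) * (v y * φ (l⁻¹ • y))) (l • x) := by
    refine integral_congr_ae (ae_of_all _ fun x => ?_)
    simp only [inv_smul_smul₀ hl.ne']
    ring
  have f1 := e1.trans (int_dil (fun y => (a * l ^ 2) *
    (u y * (((l⁻¹ : ℝ) : ℂ) * ((l⁻¹ : ℝ) : ℂ) * lapC φ (l⁻¹ • y)))) hl)
  have f2 := e2.trans (int_dil (fun y => (a * l ^ 2) * (v y * φ (l⁻¹ • y))) hl)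
  rw [f1, f2, integral_const_mul, integral_const_mul, h1]

/-- The dilation `a u(l x)` of an `H²` function. -/
def dilH2 {N : ℕ} (U : H2 N) (a l : ℝ) (hl : 0 < l) : H2 N where
  u := fun x => (a : ℂ) * U.u (l • x)
  grad := fun i x => ((a : ℂ) * l) * U.grad i (l • x)
  lapl := fun x => ((a : ℂ) * l ^ 2) * U.lapl (l • x)
  u_mem := memLp_dil U.u_mem _ hl
  grad_mem := fun i => memLp_dil (U.grad_mem i) _ hl
  lapl_mem := memLp_dil U.lapl_mem _ hl
  grad_spec := fun i => pd_dil (U.grad_spec i) _ hl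
  lapl_spec := lap_dil U.lapl_spec _ hl

theorem sq_dil {N : ℕ} (v : Esp N → ℂ) (c : ℂ) {l : ℝ} (hl : 0 < l) :
    ∫ x, ‖c * v (l • x)‖ ^ 2 = ‖c‖ ^ 2 * (l ^ N)⁻¹ * ∫ x, ‖v x‖ ^ 2 := by
  rw [int_dil_real (fun x => ‖c * v x‖ ^ 2) hl]
  simp only [norm_mul, mul_pow]
  rw [integral_const_mul]
  ring

theorem dil_mass {N : ℕ} (U : H2 N) (a l : ℝ) (hl : 0 < l) :
    (dilH2 U a l hl).massSq = a ^ 2 * (l ^ N)⁻¹ * U.massSq := by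
  refine (sq_dil U.u a hl).trans ?_
  rw [Complex.norm_real, Real.norm_eq_abs, sq_abs]; rfl

theorem dil_lap {N : ℕ} (U : H2 N) (a l : ℝ) (hl : 0 < l) :
    (dilH2 U a l hl).lapSq = a ^ 2 * l ^ 4 * (l ^ N)⁻¹ * U.lapSq := by
  refine (sq_dil U.lapl _ hl).trans ?_
  rw [norm_mul, norm_pow, Complex.norm_real, Complex.norm_real, Real.norm_eq_abs, Real.norm_eq_abs,
    mul_pow, sq_abs, sq_abs, ← pow_mul]; rfl

theorem dil_grad {N : ℕ} (U : H2 N) (a l : ℝ) (hl : 0 < l) :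
    (dilH2 U a l hl).gradSq = a ^ 2 * l ^ 2 * (l ^ N)⁻¹ * U.gradSq := by
  unfold H2.gradSq
  rw [Finset.mul_sum]
  refine Finset.sum_congr rfl fun i _ => ?_
  refine (sq_dil (U.grad i) _ hl).trans ?_
  rw [norm_mul, Complex.norm_real, Complex.norm_real, Real.norm_eq_abs, Real.norm_eq_abs,
    mul_pow, sq_abs, sq_abs]

theorem dil_pPow {N : ℕ} (U : H2 N) (σ a l : ℝ) (ha : 0 ≤ a) (hl : 0 < l) :
    (dilH2 U a l hl).pPow σ = a ^ (2 * σ + 2) * (l ^ N)⁻¹ * U.pPow σ := by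
  unfold H2.pPow
  refine (int_dil_real (fun x => ‖(a : ℂ) * U.u x‖ ^ (2 * σ + 2)) hl).trans ?_
  have : ∀ x, ‖(a : ℂ) * U.u x‖ ^ (2 * σ + 2) = a ^ (2 * σ + 2) * ‖U.u x‖ ^ (2 * σ + 2) := by
    intro x
    rw [norm_mul, Complex.norm_real, Real.norm_eq_abs, abs_of_nonneg ha, Real.mul_rpow ha (norm_nonneg _)]
  simp only [this]
  rw [integral_const_mul]
  ring

theorem schw_weak {N : ℕ} (X : 𝓢(Esp N, ℂ)) (i : Fin N) : IsWeakPDeriv X i (dS i X) := by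
  intro φ hφ
  exact SchwartzMap.integral_mul_lineDerivOp_right_eq_neg_left X (hφ.2.toSchwartzMap hφ.1) (eb i)

theorem schw_weak_lap {N : ℕ} (X : 𝓢(Esp N, ℂ)) :
    IsWeakLap X (fun x => ∑ i, (dS i (dS i X)) x) := by
  intro φ hφ
  set ψ : 𝓢(Esp N, ℂ) := hφ.2.toSchwartzMap hφ.1 with hψ
  have e : φ = ⇑ψ := rfl
  have e2 : lapC φ = fun x => ∑ i, (dS i (dS i ψ)) x := rfl
  rw [e2, e]
  simp only [Finset.mul_sum, Finset.sum_mul]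
  have hint : ∀ (f g : 𝓢(Esp N, ℂ)), Integrable (fun x => f x * g x) := fun f g =>
    (SchwartzMap.pairing (ContinuousLinearMap.mul ℝ ℂ) f g).integrable
  rw [integral_finsetSum _ fun i _ => hint _ _, integral_finsetSum _ fun i _ => hint _ _]
  refine Finset.sum_congr rfl fun i _ => ?_
  have h1 := SchwartzMap.integral_mul_lineDerivOp_right_eq_neg_left (μ := (volume : Measure (Esp N)))
    X (dS i ψ) (eb i)
  have h2 := SchwartzMap.integral_mul_lineDerivOp_right_eq_neg_left (μ := (volume : Measure (Esp N)))
    (dS i X) ψ (eb i)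
  exact h1.trans (by rw [neg_eq_iff_eq_neg]; exact h2)

theorem exists_H2 (N : ℕ) (σ : ℝ) (hσ : 0 < σ) : ∃ U : H2 N, 0 < U.pPow σ := by
  obtain ⟨X, hX, hX0⟩ := exists_cut N
  let U : H2 N :=
    { u := X
      grad := fun i => dS i X
      lapl := fun x => ∑ i, (dS i (dS i X)) x
      u_mem := X.memLp 2
      grad_mem := fun i => (dS i X).memLp 2
      lapl_mem := memLp_finsetSum _ fun i _ => (dS i (dS i X)).memLp 2
      grad_spec := schw_weak X
      lapl_spec := schw_weak_lap X }
  refine ⟨U, ?_⟩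
  have hc : Continuous (fun x => ‖X x‖ ^ (2 * σ + 2)) :=
    X.continuous.norm.rpow_const fun x => Or.inr (by positivity)
  refine hc.integral_pos_of_hasCompactSupport_nonneg_nonzero (x := 0) ?_ (fun x => by positivity) ?_
  · exact (hX.comp_left (g := fun z : ℂ => ‖z‖ ^ (2 * σ + 2))
      (by simp [Real.zero_rpow (by positivity : 2 * σ + 2 ≠ 0)]))
  · change ‖X 0‖ ^ (2 * σ + 2) ≠ 0
    simp [hX0]

theorem rLp_sq {N : ℕ} {f : Esp N → ℂ} (hf : MemLp f 2 (volume : Measure (Esp N))) :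
    rLp 2 f ^ 2 = ∫ x, ‖f x‖ ^ 2 := by
  have h : rLp 2 f = ‖(hf.toLp f : L2E N)‖ := by
    unfold rLp
    rw [Lp.norm_toLp]
    norm_num
  rw [h, Lp_norm_sq]
  refine integral_congr_ae ?_
  filter_upwards [hf.coeFn_toLp] with x hx
  rw [hx]

theorem GN_pkg (N : ℕ) (hN : 1 ≤ N) (σ : ℝ) (hσ : σ = 4 / (N : ℝ)) :
    0 < GNconst N σ ∧ (∀ U : H2 N, U.pPow σ ≤ GNconst N σ * (U.lapSq * U.massSq ^ σ)) ∧
    ∀ ε : ℝ, 0 < ε → ε < GNconst N σ → ∃ U : H2 N, 0 < U.lapSq ∧ 0 < U.massSq ∧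
      (GNconst N σ - ε) * (U.lapSq * U.massSq ^ σ) < U.pPow σ := by
  have hNpos : (0 : ℝ) < N := by exact_mod_cast hN
  have hσ0 : 0 < σ := by rw [hσ]; positivity
  obtain ⟨C, hC, hGN⟩ := GN1 N hN σ hσ
  have hden : ∀ U : H2 N, rLp 2 U.lapl ^ ((N : ℝ) * σ / 2) *
      rLp 2 U.u ^ (2 + 2 * σ - (N : ℝ) * σ / 2) = U.lapSq * U.massSq ^ σ := by
    intro U
    have e : (N : ℝ) * σ / 2 = 2 := by rw [hσ]; field_simp; norm_num
    have hr : 0 ≤ rLp 2 U.u := ENNReal.toReal_nonneg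
    rw [e, Real.rpow_two, rLp_sq U.lapl_mem, show 2 + 2 * σ - 2 = 2 * σ by ring, Real.rpow_mul hr,
      Real.rpow_two, rLp_sq U.u_mem]
    rfl
  have hset : GNconst N σ = sSup {r : ℝ | ∃ U : H2 N, U.Nontriv ∧
      r = U.pPow σ / (U.lapSq * U.massSq ^ σ)} := by
    unfold GNconst
    simp only [hden]
  have hD0 : ∀ U : H2 N, 0 ≤ U.lapSq * U.massSq ^ σ := fun U =>
    mul_nonneg (lapSq_nonneg U) (Real.rpow_nonneg (massSq_nonneg U) _)
  have hbdd : BddAbove {r : ℝ | ∃ U : H2 N, U.Nontriv ∧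
      r = U.pPow σ / (U.lapSq * U.massSq ^ σ)} := by
    refine ⟨C, ?_⟩
    rintro r ⟨U, -, rfl⟩
    exact div_le_of_le_mul₀ (hD0 U) hC.le (hGN U)
  have hpos : ∀ U : H2 N, 0 < U.pPow σ → 0 < U.lapSq ∧ 0 < U.massSq ∧ U.Nontriv := by
    intro U hU
    have h1 := hU.trans_le (hGN U)
    have hL : U.lapSq ≠ 0 := by
      intro h; rw [h] at h1; simp at h1
    have hM : U.massSq ≠ 0 := by
      intro h; rw [h, Real.zero_rpow hσ0.ne'] at h1; simp at h1
    refine ⟨(lapSq_nonneg U).lt_of_ne' hL, (massSq_nonneg U).lt_of_ne' hM, fun h => hM ?_⟩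
    have : U.massSq = ∫ x : Esp N, (0 : ℝ) := by
      refine integral_congr_ae ?_
      filter_upwards [h] with x hx
      simp [hx]
    simpa using this
  have hup : ∀ U : H2 N, 0 < U.pPow σ → U.pPow σ / (U.lapSq * U.massSq ^ σ) ≤ GNconst N σ := by
    intro U hU
    rw [hset]
    exact le_csSup hbdd ⟨U, (hpos U hU).2.2, rfl⟩
  obtain ⟨U0, hU0⟩ := exists_H2 N σ hσ0
  have hB : 0 < GNconst N σ := by
    refine lt_of_lt_of_le ?_ (hup U0 hU0)
    have h1 := (hpos U0 hU0).1
    have h2 := (hpos U0 hU0).2.1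
    positivity
  refine ⟨hB, ?_, ?_⟩
  · intro U
    rcases (pPow_nonneg U σ).eq_or_lt with h | h
    · rw [← h]; exact mul_nonneg hB.le (hD0 U)
    · have h1 := (hpos U h).1
      have h2 := (hpos U h).2.1
      have h3 := hup U h
      rwa [div_le_iff₀ (by positivity)] at h3
  · intro ε hε hεB
    have hlt : GNconst N σ - ε < sSup {r : ℝ | ∃ U : H2 N, U.Nontriv ∧
      r = U.pPow σ / (U.lapSq * U.massSq ^ σ)} := by rw [← hset]; linarith
    have hne : {r : ℝ | ∃ U : H2 N, U.Nontriv ∧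
      r = U.pPow σ / (U.lapSq * U.massSq ^ σ)}.Nonempty := ⟨_, U0, (hpos U0 hU0).2.2, rfl⟩
    obtain ⟨r, ⟨U, hU, rfl⟩, hr⟩ := exists_lt_of_lt_csSup hne hlt
    have hP : 0 < U.pPow σ := by
      rcases (pPow_nonneg U σ).eq_or_lt with h | h
      · rw [← h, zero_div] at hr; linarith
      · exact h
    have h1 := (hpos U hP).1
    have h2 := (hpos U hP).2.1
    refine ⟨U, h1, h2, ?_⟩
    rwa [lt_div_iff₀ (by positivity)] at hr

theorem scale_ex {N : ℕ} (σ : ℝ) (U : H2 N) (hM : 0 < U.massSq) (hN : 1 ≤ N)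
    (hσ : σ = 4 / (N : ℝ)) {m l : ℝ} (hm : 0 < m) (hl : 0 < l) :
    ∃ V : H2 N, V.massSq = m ∧ V.gradSq = (m / U.massSq) * l ^ 2 * U.gradSq ∧
      V.lapSq = (m / U.massSq) * l ^ 4 * U.lapSq ∧
      V.pPow σ = (m / U.massSq) * (m / U.massSq) ^ σ * l ^ 4 * U.pPow σ := by
  have hNpos : (0 : ℝ) < N := by exact_mod_cast hN
  set q := m / U.massSq with hq
  have hq0 : 0 < q := by positivity
  set a := Real.sqrt (q * l ^ N) with ha
  have ha0 : 0 < a := by positivity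
  have ha2 : a ^ 2 = q * l ^ N := Real.sq_sqrt (by positivity)
  refine ⟨dilH2 U a l hl, ?_, ?_, ?_, ?_⟩
  · rw [dil_mass, ha2, hq]; field_simp
  · rw [dil_grad, ha2]; field_simp
  · rw [dil_lap, ha2]; field_simp
  · rw [dil_pPow _ _ _ _ ha0.le, Real.rpow_add ha0, Real.rpow_mul ha0.le, Real.rpow_two, ha2,
      Real.mul_rpow hq0.le (by positivity)]
    have : ((l ^ N : ℝ)) ^ σ = l ^ 4 := by
      rw [← Real.rpow_natCast l N, ← Real.rpow_mul hl.le, hσ, mul_div_cancel₀ _ hNpos.ne',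
        ← Real.rpow_natCast l 4]
      norm_num
    rw [this]; field_simp

theorem kstar_facts (N : ℕ) (σ : ℝ) (hσ : 0 < σ) (hB : 0 < GNconst N σ) :
    0 < kstar N σ ∧ kstar N σ ^ σ = (σ + 1) / GNconst N σ := by
  unfold kstar
  refine ⟨by positivity, ?_⟩
  rw [Real.mul_rpow (by positivity) (by positivity), ← Real.rpow_mul (by positivity),
    ← Real.rpow_mul hB.le, one_div_mul_cancel hσ.ne', Real.rpow_one, neg_mul,
    one_div_mul_cancel hσ.ne', Real.rpow_neg_one]
  rfl

theorem coercive (N : ℕ) (hN : 1 ≤ N) (σ : ℝ) (hσ : σ = 4 / (N : ℝ)) (k : ℝ) (hk0 : 0 ≤ k)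
    (hk : k < kstar N σ) : ∃ η : ℝ, 0 < η ∧ ∀ U : H2 N, U.massSq ≤ k →
      2 * U.gradSq ≤ η / 2 * U.lapSq + 2 / η * k ∧
      η / 2 * U.lapSq - 2 / η * k ≤ U.energy σ := by
  have hNpos : (0 : ℝ) < N := by exact_mod_cast hN
  have hσ0 : 0 < σ := by rw [hσ]; positivity
  obtain ⟨hB, hGN, -⟩ := GN_pkg N hN σ hσ
  obtain ⟨hk1, hk2⟩ := kstar_facts N σ hσ0 hB
  set B := GNconst N σ
  have h1 : k ^ σ < (σ + 1) / B := by
    rw [← hk2]; exact Real.rpow_lt_rpow hk0 hk hσ0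
  have h2 : B * k ^ σ < σ + 1 := by
    rw [lt_div_iff₀ hB] at h1; linarith
  have hη : 0 < 1 - 1 / (σ + 1) * (B * k ^ σ) := by
    rw [one_div, inv_mul_eq_div, sub_pos, div_lt_one (by positivity)]; exact h2
  set η := 1 - 1 / (σ + 1) * (B * k ^ σ) with hηd
  refine ⟨η, hη, fun U hU => ?_⟩
  have hL := lapSq_nonneg U
  have hM := massSq_nonneg U
  have hG := gradSq_nonneg U
  have hg : 2 * U.gradSq ≤ η / 2 * U.lapSq + 2 / η * k := by
    have a1 : U.gradSq ^ 2 ≤ U.lapSq * k :=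
      (grad_sq_le U).trans (mul_le_mul_of_nonneg_left hU hL)
    have a2 : (η / 2 * U.lapSq) * (2 / η * k) = U.lapSq * k := by field_simp
    refine (sq_le_sq₀ (by positivity) (by positivity)).1 ?_
    nlinarith [sq_nonneg (η / 2 * U.lapSq - 2 / η * k)]
  refine ⟨hg, ?_⟩
  have hP : 1 / (σ + 1) * U.pPow σ ≤ 1 / (σ + 1) * (B * k ^ σ) * U.lapSq := by
    have b1 : U.massSq ^ σ ≤ k ^ σ := Real.rpow_le_rpow hM hU hσ0.le
    calc 1 / (σ + 1) * U.pPow σ ≤ 1 / (σ + 1) * (B * (U.lapSq * k ^ σ)) := by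
          gcongr
          exact (hGN U).trans (by gcongr)
      _ = _ := by ring
  unfold H2.energy
  have : η * U.lapSq = U.lapSq - 1 / (σ + 1) * (B * k ^ σ) * U.lapSq := by rw [hηd]; ring
  linarith

theorem blowup (N : ℕ) (hN : 1 ≤ N) (σ : ℝ) (hσ : σ = 4 / (N : ℝ)) (m : ℝ)
    (hm : kstar N σ ≤ m) (K : ℝ) (hK : 0 < K) :
    ∃ U : H2 N, U.massSq = m ∧ U.energy σ ≤ -K := by
  have hNpos : (0 : ℝ) < N := by exact_mod_cast hN
  have hσ0 : 0 < σ := by rw [hσ]; positivity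
  obtain ⟨hB, hGN, happ⟩ := GN_pkg N hN σ hσ
  obtain ⟨hk1, hk2⟩ := kstar_facts N σ hσ0 hB
  obtain ⟨C, hC, hGN2⟩ := GN2 N hN σ hσ
  set B := GNconst N σ
  have hm0 : 0 < m := hk1.trans_le hm
  have hmσ : (σ + 1) / B ≤ m ^ σ := by
    rw [← hk2]; exact Real.rpow_le_rpow hk1.le hm hσ0.le
  have hmσ0 : 0 < m ^ σ := by positivity
  -- lower bound on the gradient
  obtain ⟨g0, hg0, hg⟩ : ∃ g0 : ℝ, 0 < g0 ∧ ∀ g, 0 ≤ g →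
      B / 2 * m ^ σ < C * (g * m ^ σ + g ^ σ) → g0 ≤ g := by
    have hcont : Continuous (fun g : ℝ => C * (g * m ^ σ + g ^ σ)) := by
      have := Real.continuous_rpow_const hσ0.le
      fun_prop
    have h0 : C * ((0 : ℝ) * m ^ σ + (0 : ℝ) ^ σ) < B / 2 * m ^ σ := by
      rw [Real.zero_rpow hσ0.ne']; simp; positivity
    have hev := (hcont.tendsto 0).eventually (gt_mem_nhds h0)
    obtain ⟨g0, hg0, hball⟩ := Metric.eventually_nhds_iff.1 hev
    refine ⟨g0, hg0, fun g hg hlt => ?_⟩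
    by_contra hcon
    push Not at hcon
    have := hball (y := g) (by rw [Real.dist_eq, sub_zero, abs_of_nonneg hg]; exact hcon)
    linarith
  set t := K / g0 with ht
  have ht0 : 0 < t := by positivity
  set ε := min (B / 2) (B * g0 / t) with hε
  have hε0 : 0 < ε := by positivity
  have hε1 : ε ≤ B / 2 := min_le_left _ _
  have hε2 : ε ≤ B * g0 / t := min_le_right _ _
  obtain ⟨U, hL, hM, hP⟩ := happ ε hε0 (by linarith)
  -- normalise
  set l : ℝ := (U.massSq / (m * U.lapSq)) ^ ((1 : ℝ) / 4) with hl
  have hl0 : 0 < l := by positivity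
  have hl4 : l ^ 4 = U.massSq / (m * U.lapSq) := by
    rw [hl, ← Real.rpow_natCast, ← Real.rpow_mul (by positivity)]
    norm_num
  obtain ⟨V, v1, v2, v3, v4⟩ := scale_ex σ U hM hN hσ hm0 hl0
  have hVL : V.lapSq = 1 := by rw [v3, hl4]; field_simp
  have hVP : (B - ε) * m ^ σ < V.pPow σ := by
    rw [v4, hl4, Real.div_rpow hm0.le hM.le]
    have e : m / U.massSq * (m ^ σ / U.massSq ^ σ) * (U.massSq / (m * U.lapSq)) * U.pPow σ =
        m ^ σ * (U.pPow σ / (U.lapSq * U.massSq ^ σ)) := by field_simp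
    rw [e, mul_comm]
    gcongr
    rwa [lt_div_iff₀ (by positivity)]
  have hVG : g0 ≤ V.gradSq := by
    apply hg _ (gradSq_nonneg V)
    have h1 := hGN2 V
    rw [v1, hVL, one_mul] at h1
    have : B / 2 * m ^ σ ≤ (B - ε) * m ^ σ := by gcongr; linarith
    linarith
  obtain ⟨W, w1, w2, w3, w4⟩ := scale_ex σ V (by rw [v1]; exact hm0) hN hσ hm0 (Real.sqrt_pos.2 ht0)
  have hs2 : Real.sqrt t ^ 2 = t := Real.sq_sqrt ht0.le
  have hs4 : Real.sqrt t ^ 4 = t ^ 2 := by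
    rw [show (4 : ℕ) = 2 * 2 by norm_num, pow_mul, hs2]
  rw [v1, div_self hm0.ne', one_mul, hs2] at w2
  rw [v1, div_self hm0.ne', one_mul, hs4, hVL, mul_one] at w3
  rw [v1, div_self hm0.ne', one_mul, Real.one_rpow, one_mul, hs4] at w4
  refine ⟨W, w1, ?_⟩
  unfold H2.energy
  rw [w2, w3, w4]
  have hp : 1 - ε / B ≤ 1 / (σ + 1) * V.pPow σ := by
    have h1 : (B - ε) * ((σ + 1) / B) ≤ V.pPow σ :=
      (mul_le_mul_of_nonneg_left hmσ (by linarith)).trans hVP.le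
    calc 1 - ε / B = 1 / (σ + 1) * ((B - ε) * ((σ + 1) / B)) := by field_simp
      _ ≤ _ := by gcongr
  have hεt : t ^ 2 * (ε / B) ≤ t * g0 := by
    have : ε / B ≤ g0 / t := by
      rw [div_le_iff₀ hB]
      calc ε ≤ B * g0 / t := hε2
        _ = _ := by ring
    calc t ^ 2 * (ε / B) ≤ t ^ 2 * (g0 / t) := by gcongr
      _ = _ := by field_simp
  have htg : t * g0 = K := by rw [ht]; field_simp
  have hG : t * g0 ≤ t * V.gradSq := by gcongr
  have hp2 : t ^ 2 * (1 - ε / B) ≤ t ^ 2 * (1 / (σ + 1) * V.pPow σ) := by gcongr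
  nlinarith

theorem stmt7' (N : ℕ) (σ : ℝ) (hN : 1 ≤ N) (hσ : σ = 4 / (N : ℝ)) :
    (∀ m : ℝ, 0 < m → m < kstar N σ → ⊥ < EminE N σ m ∧ EminE N σ m < ⊤) ∧
    (∀ m : ℝ, kstar N σ ≤ m → EminE N σ m = ⊥) ∧
    (∀ k₁ k₂ : ℝ, k₁ < kstar N σ → 0 < k₂ → ∃ C : ℝ, ∀ U : H2 N,
      U.massSq ≤ k₁ → U.energy σ ≤ k₂ → U.h2NormSq ≤ C) := by
  have hNpos : (0 : ℝ) < N := by exact_mod_cast hN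
  have hσ0 : 0 < σ := by rw [hσ]; positivity
  refine ⟨?_, ?_, ?_⟩
  · intro m hm hmk
    constructor
    · obtain ⟨η, hη, h⟩ := coercive N hN σ hσ m hm.le hmk
      have hle : (((- (2 / η * m) : ℝ)) : EReal) ≤ EminE N σ m := by
        refine le_iInf₂ fun U hU => ?_
        have h1 := (h U hU.le).2
        have h2 := lapSq_nonneg U
        have h3 : 0 ≤ η / 2 * U.lapSq := by positivity
        exact EReal.coe_le_coe_iff.2 (by linarith)
      exact (EReal.bot_lt_coe _).trans_le hle
    · obtain ⟨hB, -, happ⟩ := GN_pkg N hN σ hσ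
      obtain ⟨U, -, hM, -⟩ := happ (GNconst N σ / 2) (by positivity) (by linarith)
      obtain ⟨V, hV, -⟩ := scale_ex σ U hM hN hσ hm one_pos
      exact (iInf₂_le V hV).trans_lt (EReal.coe_lt_top _)
  · intro m hm
    rw [EReal.eq_bot_iff_forall_lt]
    intro y
    obtain ⟨U, hU, hE⟩ := blowup N hN σ hσ m hm (|y| + 1) (by positivity)
    refine (iInf₂_le U hU).trans_lt (EReal.coe_lt_coe_iff.2 ?_)
    linarith [neg_abs_le y]
  · intro k₁ k₂ hk₁ hk₂
    rcases lt_or_ge k₁ 0 with hneg | hk0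
    · exact ⟨0, fun U hU _ => absurd (massSq_nonneg U) (by linarith)⟩
    obtain ⟨η, hη, h⟩ := coercive N hN σ hσ k₁ hk0 hk₁
    set R := k₂ + 2 / η * k₁ with hR
    refine ⟨k₁ + (R + 2 / η * k₁) / 2 + 2 / η * R, fun U hU hE => ?_⟩
    obtain ⟨h1, h2⟩ := h U hU
    have h3 : η / 2 * U.lapSq ≤ R := by linarith
    have h4 : U.lapSq ≤ 2 / η * R := by
      calc U.lapSq = 2 / η * (η / 2 * U.lapSq) := by field_simp
        _ ≤ _ := by gcongr
    unfold H2.h2NormSq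
    linarith

end

/-- In the mass-critical case `σ = 4/N`, with
`k* = (σ+1)^{1/σ} B(N,σ)^{-1/σ}`: `E_min(m)` is finite on `(0, k*)`, `E_min(m) = -∞` for
`m ≥ k*`, and sublevel sets of the energy with mass `≤ k₁ < k*` are bounded in `H²`. -/
theorem stmt7 (N : ℕ) (σ : ℝ) (hN : 1 ≤ N) (hσ : σ = 4 / (N : ℝ)) :
    (∀ m : ℝ, 0 < m → m < kstar N σ → ⊥ < EminE N σ m ∧ EminE N σ m < ⊤) ∧
    (∀ m : ℝ, kstar N σ ≤ m → EminE N σ m = ⊥) ∧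
    (∀ k₁ k₂ : ℝ, k₁ < kstar N σ → 0 < k₂ → ∃ C : ℝ, ∀ U : H2 N,
      U.massSq ≤ k₁ → U.energy σ ≤ k₂ → U.h2NormSq ≤ C) := by
  exact stmt7' N σ hN hσ

end
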